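/- Let M be a germ at 0 of a real hypersurface in ℂ² defined by ρ(z₁,z₂) = Re z₁ + P(z₂) + f(z₂, Im z₁) = 0, where f is real analytic in a neighborhood of 0 in ℂ×ℝ with f(z₂,0) ≡ 0, P is C^∞-smooth with P(z₂) > 0 for all z₂ ≠ 0 in its domain and P(0) = 0, P vanishes to infinite order at z₂ = 0, and M is not rotationally symmetric (i.e. ρ(z₁,z₂) is not a function of (z₁,|z₂|) alone). Let H = h₁ ∂/∂z₁ + h₂ ∂/∂z₂ be a holomorphic vector field germ at (0,0), not identically zero, vanishing at (0,0), tangent to M, normalized so that h₂(0,z₂) = iβz₂ on a neighborhood of 0 for some β ∈ ℝ∖{0}. Then ∂h₂/∂z₁(0,z₂) ≡ 0 on a neighborhood of 0 (i.e. the coefficient b₁ of z₁ in the expansion h₂(z₁,z₂) = Σ_j z₁ʲ b_j(z₂) vanishes identically). -/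

import Mathlib

open Filter Set Metric Complex

/-- The Wirtinger derivative `∂u/∂z = (u_x - i u_y)/2` of a real-valued function on `ℂ`. -/
noncomputable def wDeriv (u : ℂ → ℝ) (z : ℂ) : ℂ :=
  (((fderiv ℝ u z) 1 : ℝ) - Complex.I * ((fderiv ℝ u z) Complex.I : ℝ)) / 2

open scoped Topology NNReal

/-!
Expanding the tangency equation to first order in `P` along the slice `z₁ = 0`, the parts that do
not involve `P` are analytic and flat, hence vanish. With `a` and `b` the restrictions of `∂h₁/∂z₁`
and `∂h₂/∂z₁` to the slice, this leaves `∂P/∂θ = O(P)` and a transverse equation saying that the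
derivative of `P` along `(i - g) b` is `O(P)`, where `g = ∂f/∂(Im z₁)` on the slice.

A flat positive `P` cannot have its radial derivative `O(P)`, even only at suitable maxima along
circles, because it decays faster than every power. If `b` vanishes to order at most one at `0`,
evaluating both equations where `P e^{-q}` is maximal on its circle, for a `q` with
`∂P/∂θ = P ∂q/∂θ` to leading order, contradicts this. If `b = z ^ (m + 1) c` with `m ≥ 1` and
`c 0 ≠ 0`, the curves where `Re (z ^ m (i - g) c) = 0` carry no radial derivative; they are numerous
enough to force the analytic coefficient of `P` in the transverse equation to be `O(|z| ^ m)`, so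
that the radial derivative of `P` is `O(P)` on a sector around a ray where
`z ^ m (i - g(0)) c 0 > 0`.
-/

section Flat

variable {E F G : Type*} [NormedAddCommGroup E] [NormedAddCommGroup F] [NormedAddCommGroup G]

/-- `u` is flat if it vanishes to infinite order at the origin. -/
def IsFlat (u : E → F) : Prop := ∀ n : ℕ, u =o[𝓝 0] fun z => ‖z‖ ^ n

namespace IsFlat

variable {u : E → F}

theorem trans_isBigO {v : E → G} (hu : IsFlat u) (hv : v =O[𝓝 0] u) : IsFlat v :=
  fun n => hv.trans_isLittleO (hu n)

theorem tendsto_zero (hu : IsFlat u) : Tendsto u (𝓝 0) (𝓝 0) :=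
  (Asymptotics.isLittleO_one_iff ℝ).1 (by simpa using hu 0)

theorem apply_zero (hu : IsFlat u) : u 0 = 0 := by
  simpa using ((hu 1).bound one_pos).self_of_nhds

theorem hasFDerivAt_zero [NormedSpace ℝ E] [NormedSpace ℝ F] (hu : IsFlat u) :
    HasFDerivAt u (0 : E →L[ℝ] F) 0 := by
  rw [hasFDerivAt_iff_isLittleO_nhds_zero]
  simpa [hu.apply_zero] using Asymptotics.isLittleO_norm_right.1 (by simpa using hu 1)

end IsFlat

variable [NormedSpace ℝ E]

theorem sub_fderiv_le_of_lipschitzOnWith_fderiv {u : E → ℝ} {K : ℝ≥0} {y v : E} {δ : ℝ}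
    (hd : ∀ x ∈ closedBall y δ, DifferentiableAt ℝ u x)
    (hK : LipschitzOnWith K (fderiv ℝ u) (closedBall y δ)) (hv : ‖v‖ ≤ δ) :
    u (y - v) ≤ u y - fderiv ℝ u y v + K * ‖v‖ ^ 2 := by
  have hy : y ∈ closedBall y δ := mem_closedBall_self ((norm_nonneg v).trans hv)
  have hsub : closedBall y ‖v‖ ⊆ closedBall y δ := closedBall_subset_closedBall hv
  have h := (convex_closedBall y ‖v‖).norm_image_sub_le_of_norm_fderiv_le' (f := u) (x := y)
    (y := y - v) (φ := fderiv ℝ u y) (C := K * ‖v‖) (fun x hx => hd x (hsub hx))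
    (fun x hx => (hK.norm_sub_le (hsub hx) hy).trans
      (by gcongr; exact mem_closedBall_iff_norm.1 hx))
    (mem_closedBall_self (norm_nonneg v)) (by simp)
  simp only [sub_sub_cancel_left, map_neg, norm_neg, Real.norm_eq_abs] at h
  linarith [le_abs_self (u (y - v) - u y - -fderiv ℝ u y v)]

-- Glaeser's inequality: minimize over the length of `v` the quadratic upper bound of `u (y - v)`.
theorem norm_fderiv_sq_le_of_lipschitzOnWith_fderiv {u : E → ℝ} {K : ℝ≥0} {y : E} {δ : ℝ}
    (hK0 : 0 < K) (hd : ∀ x ∈ closedBall y δ, DifferentiableAt ℝ u x)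
    (hK : LipschitzOnWith K (fderiv ℝ u) (closedBall y δ)) (hpos : ∀ x ∈ closedBall y δ, 0 ≤ u x)
    (hδ : ‖fderiv ℝ u y‖ ≤ 2 * K * δ) : ‖fderiv ℝ u y‖ ^ 2 ≤ 4 * K * u y := by
  have hδ0 : 0 ≤ δ := nonneg_of_mul_nonneg_right ((norm_nonneg _).trans hδ) (by positivity)
  have hy := hpos y (mem_closedBall_self hδ0)
  suffices ‖fderiv ℝ u y‖ ≤ √(4 * K * u y) from
    (Real.le_sqrt (norm_nonneg _) (by positivity)).1 this
  refine ContinuousLinearMap.opNorm_le_of_unit_norm (Real.sqrt_nonneg _) fun v hv => ?_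
  set D := fderiv ℝ u y v with hD
  have hDδ : |D| ≤ 2 * K * δ := by
    simpa [hv] using ((fderiv ℝ u y).le_opNorm v).trans (by simpa [hv])
  have hstep : ‖(D / (2 * K)) • v‖ = |D| / (2 * K) := by simp [norm_smul, hv]
  have hstepδ : ‖(D / (2 * K)) • v‖ ≤ δ := by
    rw [hstep, div_le_iff₀ (by positivity)]; linarith
  have hle := sub_fderiv_le_of_lipschitzOnWith_fderiv hd hK hstepδ
  have hnonneg := hpos (y - (D / (2 * K)) • v) (by simpa using hstepδ)
  rw [hstep, map_smul, smul_eq_mul, ← hD, div_pow, sq_abs] at hle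
  have hmin : u y - D / (2 * K) * D + K * (D ^ 2 / (2 * K) ^ 2) = u y - D ^ 2 / (4 * K) := by
    field_simp; ring
  refine Real.le_sqrt_of_sq_le ?_
  rw [Real.norm_eq_abs, sq_abs, ← div_le_iff₀' (by positivity)]
  linarith

theorem isBigO_norm_fderiv_sq_of_nonneg {u : E → ℝ} {x : E} (hu : ContDiffAt ℝ 2 u x)
    (hpos : ∀ᶠ y in 𝓝 x, 0 ≤ u y) (hx : fderiv ℝ u x = 0) :
    (fun y => ‖fderiv ℝ u y‖ ^ 2) =O[𝓝 x] u := by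
  have hu' : ContDiffAt ℝ 1 (fderiv ℝ u) x := hu.fderiv_right (by norm_num)
  obtain ⟨K, t, ht, hK⟩ := hu'.exists_lipschitzOnWith
  have hdiff : ∀ᶠ y in 𝓝 x, DifferentiableAt ℝ u y :=
    (hu.eventually (by simp)).mono fun y hy => hy.differentiableAt (by norm_num)
  obtain ⟨δ, hδ, hball⟩ := Metric.eventually_nhds_iff_ball.1
    ((eventually_mem_set.2 ht).and (hpos.and hdiff))
  have hsmall : ∀ᶠ y in 𝓝 x, ‖fderiv ℝ u y‖ < 2 * (K + 1) * (δ / 2) :=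
    hu'.continuousAt.norm.tendsto.eventually_lt_const (by simp only [hx, norm_zero]; positivity)
  refine Asymptotics.IsBigO.of_bound (4 * (K + 1)) ?_
  filter_upwards [ball_mem_nhds x (half_pos hδ), hsmall, hpos] with y hy hDy hy0
  have hsub : closedBall y (δ / 2) ⊆ ball x δ :=
    closedBall_subset_ball' (by linarith [mem_ball.1 hy])
  rw [norm_pow, norm_norm, Real.norm_of_nonneg hy0]
  exact norm_fderiv_sq_le_of_lipschitzOnWith_fderiv (K := K + 1) (by positivity)
    (fun w hw => (hball w (hsub hw)).2.2)
    ((hK.weaken (by simp)).mono fun w hw => (hball w (hsub hw)).1)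
    (fun w hw => (hball w (hsub hw)).2.1) hDy.le

theorem IsFlat.fderiv_of_nonneg {u : E → ℝ} (hflat : IsFlat u) (hu : ContDiffAt ℝ 2 u 0)
    (hpos : ∀ᶠ z in 𝓝 0, 0 ≤ u z) : IsFlat (fderiv ℝ u) := by
  have hsq : IsFlat fun z => ‖fderiv ℝ u z‖ ^ 2 :=
    hflat.trans_isBigO (isBigO_norm_fderiv_sq_of_nonneg hu hpos hflat.hasFDerivAt_zero.fderiv)
  intro n
  refine Asymptotics.IsLittleO.of_norm_left (Asymptotics.IsLittleO.of_pow (n := 2) ?_ two_ne_zero)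
  exact (hsq (n * 2)).congr_right fun z => pow_mul _ _ _

variable [NormedSpace ℝ F]

theorem isBigO_sub_of_lower_terms_eq_zero {u : E → F} {p : FormalMultilinearSeries ℝ E F} {n : ℕ}
    (hu : HasFPowerSeriesAt u p 0) (hp : ∀ j < n, ∀ y, p j (fun _ => y) = 0) :
    (fun y => u y - p n fun _ => y) =O[𝓝 0] fun y => ‖y‖ ^ (n + 1) := by
  refine (hu.isBigO_sub_partialSum_pow (n + 1)).congr_left fun y => ?_
  rw [zero_add, FormalMultilinearSeries.partialSum, Finset.sum_range_succ,
    Finset.sum_eq_zero fun j hj => hp j (Finset.mem_range.1 hj) y, zero_add]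

theorem eventually_eq_zero_of_terms_eq_zero {u : E → F} {p : FormalMultilinearSeries ℝ E F}
    (hu : HasFPowerSeriesAt u p 0) (hp : ∀ n y, p n (fun _ => y) = 0) : ∀ᶠ z in 𝓝 0, u z = 0 := by
  filter_upwards [hu.eventually_hasSum] with z hz
  simp only [hp, zero_add] at hz
  exact hz.unique hasSum_zero

theorem IsFlat.eventually_eq_zero {u : E → F} (hflat : IsFlat u) (hu : AnalyticAt ℝ u 0) :
    ∀ᶠ z in 𝓝 0, u z = 0 := by
  obtain ⟨p, hp⟩ := hu
  refine eventually_eq_zero_of_terms_eq_zero hp fun n => ?_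
  induction n using Nat.strong_induction_on with
  | h n ih =>
    refine Asymptotics.IsBigO.continuousMultilinearMap_apply_eq_zero ?_
    simpa using (hflat (n + 1)).isBigO.sub (isBigO_sub_of_lower_terms_eq_zero hp ih)

end Flat

section CriticalPoints

variable {U : ℂ → ℝ} {z : ℂ}

theorem fderiv_I_mul_eq_zero_of_isMaxOn_sphere (hU : DifferentiableAt ℝ U z)
    (hmax : IsMaxOn U (sphere 0 ‖z‖) z) : fderiv ℝ U z (I * z) = 0 := by
  have hrot : HasDerivAt (fun θ : ℝ => exp (θ * I) * z) (I * z) 0 := by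
    simpa using (((ofRealCLM.hasDerivAt (x := (0 : ℝ))).mul_const I).cexp).mul_const z
  have hderiv : HasDerivAt (fun θ : ℝ => U (exp (θ * I) * z)) _ 0 :=
    HasFDerivAt.comp_hasDerivAt_of_eq 0 hU.hasFDerivAt hrot (by simp)
  have hlocal : IsLocalMax (fun θ : ℝ => U (exp (θ * I) * z)) 0 := Eventually.of_forall fun θ => by
    have hθ : exp (θ * I) * z ∈ sphere (0 : ℂ) ‖z‖ := by simp [norm_exp_ofReal_mul_I]
    simpa using hmax hθ
  exact hlocal.hasDerivAt_eq_zero hderiv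

theorem nat_mul_le_fderiv_apply_self {K : ℕ} (hU : DifferentiableAt ℝ U z)
    (hray : ∀ s ∈ Ioc (0 : ℝ) 1, U (s * z) ≤ s ^ K * U z) : K * U z ≤ fderiv ℝ U z z := by
  have hscale : HasDerivAt (fun s : ℝ => (s : ℂ) * z) z 1 := by
    simpa using (ofRealCLM.hasDerivAt (x := (1 : ℝ))).mul_const z
  have hderiv : HasDerivAt (fun s : ℝ => U (s * z) - s ^ K * U z) (fderiv ℝ U z z - K * U z) 1 := by
    have hUs : HasDerivAt (fun s : ℝ => U (s * z)) _ 1 :=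
      HasFDerivAt.comp_hasDerivAt_of_eq 1 hU.hasFDerivAt hscale (by simp)
    simpa only [one_pow, mul_one, Nat.cast_id] using
      hUs.fun_sub ((hasDerivAt_pow K (1 : ℝ)).mul_const (U z))
  have hmax : IsMaxOn (fun s : ℝ => U (s * z) - s ^ K * U z) (Icc (1 / 2) 1) 1 := fun s hs => by
    have hs' := hray s ⟨by linarith [hs.1], hs.2⟩
    simp only [Set.mem_ofPred_eq, ofReal_one, one_mul, one_pow, sub_self]
    linarith
  have hcone : (-(1 / 2) : ℝ) ∈ posTangentConeAt (Icc (1 / 2 : ℝ) 1) 1 :=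
    mem_posTangentConeAt_of_segment_subset
      ((convex_Icc _ _).segment_subset (by norm_num) (by norm_num))
  have hle := hmax.localize.hasFDerivWithinAt_nonpos hderiv.hasFDerivAt.hasFDerivWithinAt hcone
  simp only [ContinuousLinearMap.toSpanSingleton_apply, smul_eq_mul] at hle
  linarith

theorem IsFlat.continuousAt_div_norm_pow (hflat : IsFlat U) (K : ℕ) :
    ContinuousAt (fun z => U z / ‖z‖ ^ K) 0 := by
  have h := (hflat K).tendsto_div_nhds_zero
  simpa [ContinuousAt, hflat.apply_zero] using h

-- Maximize `U z / ‖z‖ ^ K` over the part of `S` in the ball.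
theorem IsFlat.exists_forall_le_pow_mul {S : Set ℂ} {δ : ℝ} {w₀ : ℂ} (hflat : IsFlat U)
    (hS : IsClosed S) (hw₀ : w₀ ∈ S ∩ closedBall 0 δ) (hw₀0 : w₀ ≠ 0)
    (hcont : ContinuousOn U (closedBall 0 δ)) (hpos : ∀ z ∈ closedBall 0 δ, z ≠ 0 → 0 < U z)
    (K : ℕ) : ∃ z ∈ S ∩ closedBall 0 δ, z ≠ 0 ∧
      ∀ s ∈ Ioc (0 : ℝ) 1, ∀ w ∈ S, ‖w‖ = s * ‖z‖ → U w ≤ s ^ K * U z := by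
  have hquot : ContinuousOn (fun z => U z / ‖z‖ ^ K) (S ∩ closedBall 0 δ) := fun z hz => by
    rcases eq_or_ne z 0 with rfl | hz0
    · exact (hflat.continuousAt_div_norm_pow K).continuousWithinAt
    · exact ((hcont z hz.2).mono inter_subset_right).div (by fun_prop)
        (pow_ne_zero _ (norm_ne_zero_iff.2 hz0))
  obtain ⟨z, hz, hmax⟩ :=
    ((isCompact_closedBall (0 : ℂ) δ).inter_left hS).exists_isMaxOn ⟨w₀, hw₀⟩ hquot
  have hz0 : z ≠ 0 := by
    rintro rfl
    have hle : U w₀ / ‖w₀‖ ^ K ≤ U 0 / ‖(0 : ℂ)‖ ^ K := hmax hw₀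
    rw [hflat.apply_zero, zero_div] at hle
    exact hle.not_gt (div_pos (hpos _ hw₀.2 hw₀0) (pow_pos (norm_pos_iff.2 hw₀0) K))
  have hnorm : 0 < ‖z‖ := norm_pos_iff.2 hz0
  refine ⟨z, hz, hz0, fun s hs w hwS hw => ?_⟩
  have hs0 : 0 < s := hs.1
  have hwmem : w ∈ closedBall (0 : ℂ) δ := by
    rw [mem_closedBall_zero_iff, hw]
    exact (mul_le_of_le_one_left hnorm.le hs.2).trans (mem_closedBall_zero_iff.1 hz.2)
  have hle : U w / ‖w‖ ^ K ≤ U z / ‖z‖ ^ K := hmax ⟨hwS, hwmem⟩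
  rw [hw, mul_pow, div_le_div_iff₀ (by positivity) (by positivity)] at hle
  refine le_of_mul_le_mul_right (hle.trans_eq ?_) (pow_pos hnorm K)
  ring

theorem IsFlat.frequently_isMaxOn_sphere {S : Set ℂ} (hflat : IsFlat U)
    (hd : ∀ᶠ z in 𝓝 0, DifferentiableAt ℝ U z) (hpos : ∀ᶠ z in 𝓝[≠] 0, 0 < U z)
    (hS : IsClosed S) (hcone : ∀ z ∈ S, ∀ s : ℝ, 0 < s → s * z ∈ S) (hne : ∃ w ∈ S, w ≠ 0)
    (K : ℕ) :
    ∃ᶠ z in 𝓝[≠] 0, z ∈ S ∧ IsMaxOn U (S ∩ sphere 0 ‖z‖) z ∧ K * U z ≤ fderiv ℝ U z z := by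
  refine frequently_iff.2 fun {V} hV => ?_
  obtain ⟨δ, hδ, hball⟩ := nhds_basis_closedBall.mem_iff.1
    ((mem_nhdsWithin_iff_eventually.1 (Filter.inter_mem hV hpos)).and hd)
  obtain ⟨w, hwS, hw0⟩ := hne
  have hw : 0 < ‖w‖ := norm_pos_iff.2 hw0
  have hscaled : ((δ / ‖w‖ : ℝ) : ℂ) * w ∈ S ∩ closedBall 0 δ :=
    ⟨hcone w hwS _ (by positivity), by simp [abs_of_pos hδ, hw.ne']⟩
  obtain ⟨z, ⟨hzS, hz⟩, hz0, hmax⟩ := hflat.exists_forall_le_pow_mul hS hscaled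
    (mul_ne_zero (ofReal_ne_zero.2 (by positivity)) hw0)
    (fun z hz => (hball hz).2.continuousAt.continuousWithinAt)
    (fun z hz hz0 => ((hball hz).1 hz0).2) K
  refine ⟨z, ((hball hz).1 hz0).1, hzS, fun y hy => ?_, ?_⟩
  · simpa using hmax 1 (by simp) y hy.1 (by simpa using hy.2)
  · refine nat_mul_le_fderiv_apply_self (hball hz).2 fun s hs => ?_
    exact hmax s hs _ (hcone z hzS s hs.1) (by simp [abs_of_pos hs.1])

theorem IsFlat.frequently_fderiv_I_mul_eq_zero (hflat : IsFlat U)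
    (hd : ∀ᶠ z in 𝓝 0, DifferentiableAt ℝ U z) (hpos : ∀ᶠ z in 𝓝[≠] 0, 0 < U z) (K : ℕ) :
    ∃ᶠ z in 𝓝[≠] 0, fderiv ℝ U z (I * z) = 0 ∧ K * U z ≤ fderiv ℝ U z z := by
  have hmax := hflat.frequently_isMaxOn_sphere hd hpos isClosed_univ
    (fun _ _ _ _ => mem_univ _) ⟨1, mem_univ _, one_ne_zero⟩ K
  refine (hmax.and_eventually (eventually_nhdsWithin_of_eventually_nhds hd)).mono ?_
  rintro z ⟨⟨-, hz, hrad⟩, hdz⟩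
  exact ⟨fderiv_I_mul_eq_zero_of_isMaxOn_sphere hdz (by simpa using hz), hrad⟩

-- Apply the unperturbed statement to `P * exp (-q)`.
theorem IsFlat.frequently_fderiv_I_mul_eq_mul {P q : ℂ → ℝ} (hflat : IsFlat P)
    (hP : ∀ᶠ z in 𝓝 0, DifferentiableAt ℝ P z) (hpos : ∀ᶠ z in 𝓝[≠] 0, 0 < P z)
    (hq : ContDiffAt ℝ 1 q 0) (C : ℝ) :
    ∃ᶠ z in 𝓝[≠] 0, fderiv ℝ P z (I * z) = P z * fderiv ℝ q z (I * z) ∧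
      C * P z < fderiv ℝ P z z := by
  have hqd : ∀ᶠ z in 𝓝 0, DifferentiableAt ℝ q z :=
    (hq.eventually (by simp)).mono fun z hz => hz.differentiableAt one_ne_zero
  have hUflat : IsFlat fun z => P z * Real.exp (-q z) := hflat.trans_isBigO <| by
    simpa using (Asymptotics.isBigO_refl P (𝓝 0)).mul
      ((hq.continuousAt.neg.rexp).tendsto.isBigO_one ℝ)
  have hU : ∀ᶠ z in 𝓝 0, HasFDerivAt (fun z => P z * Real.exp (-q z))
      (P z • (Real.exp (-q z) • (-fderiv ℝ q z)) + Real.exp (-q z) • fderiv ℝ P z) z := by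
    filter_upwards [hP, hqd] with z hPz hqz using hPz.hasFDerivAt.mul hqz.hasFDerivAt.neg.exp
  have hradial : ∀ᶠ z in 𝓝 0, -1 < fderiv ℝ q z z := by
    have hcont : ContinuousAt (fun z => fderiv ℝ q z z) 0 :=
      (hq.continuousAt_fderiv one_ne_zero).clm_apply continuousAt_id
    exact hcont.eventually (lt_mem_nhds (by simp))
  obtain ⟨K, hK⟩ := exists_nat_gt (C + 1)
  refine ((hUflat.frequently_fderiv_I_mul_eq_zero (hU.mono fun z hz => hz.differentiableAt)
    (hpos.mono fun z hz => by positivity) K).and_eventually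
    ((eventually_nhdsWithin_of_eventually_nhds (hU.and hradial)).and hpos)).mono ?_
  rintro z ⟨⟨hang, hrad⟩, ⟨hUz, hqz⟩, hPz⟩
  have hexp : 0 < Real.exp (-q z) := Real.exp_pos _
  rw [hUz.fderiv] at hang hrad
  simp only [_root_.add_apply, _root_.smul_apply, _root_.neg_apply, smul_eq_mul] at hang hrad
  constructor
  · refine sub_eq_zero.1 ((mul_eq_zero.1 ?_).resolve_left hexp.ne')
    linear_combination hang
  · have hrad' : (K + fderiv ℝ q z z) * P z ≤ fderiv ℝ P z z := by
      refine le_of_mul_le_mul_left ?_ hexp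
      linear_combination hrad
    exact lt_of_lt_of_le (mul_lt_mul_of_pos_right (by linarith) hPz) hrad'

end CriticalPoints

section AngularPrimitive

theorem exists_eventually_hasDerivAt_of_analyticAt {a : ℂ → ℂ} {z₀ : ℂ} (ha : AnalyticAt ℂ a z₀) :
    ∃ E : ℂ → ℂ, ∀ᶠ z in 𝓝 z₀, HasDerivAt E (a z) z := by
  obtain ⟨r, hr, hball⟩ := nhds_basis_ball.mem_iff.1 ha.eventually_analyticAt
  have hd : DifferentiableOn ℂ a (ball z₀ r) := fun z hz =>
    (hball hz).differentiableAt.differentiableWithinAt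
  obtain ⟨E, hE⟩ := hd.isExactOn_ball
  exact ⟨E, eventually_of_mem (ball_mem_nhds z₀ hr) hE⟩

-- `q = log (1 + g ^ 2) / 2 + Re E`, where `E' = a z / (I * β * z)`.
theorem exists_contDiffAt_mul_fderiv_I_mul_eq {a : ℂ → ℂ} {g : ℂ → ℝ} {β : ℝ}
    (hg : ContDiffAt ℝ 1 g 0) (ha : AnalyticAt ℂ a 0) (ha0 : a 0 = 0) (hβ : β ≠ 0)
    (hang : ∀ᶠ z in 𝓝 0, β * fderiv ℝ g z (I * z) = (1 + g z ^ 2) * (a z).im) :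
    ∃ q : ℂ → ℝ, ContDiffAt ℝ 1 q 0 ∧
      ∀ᶠ z in 𝓝 0, β * fderiv ℝ q z (I * z) = (a z).re + g z * (a z).im := by
  have hslope : AnalyticAt ℂ (fun z => dslope a 0 z / (I * β)) 0 := by
    obtain ⟨p, hp⟩ := ha
    exact hp.has_fpower_series_dslope_fslope.analyticAt.div_const
  obtain ⟨E, hE⟩ := exists_eventually_hasDerivAt_of_analyticAt hslope
  have hEan : AnalyticAt ℂ E 0 :=
    analyticAt_iff_eventually_differentiableAt.2 (hE.mono fun z hz => hz.differentiableAt)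
  have hgd : ∀ᶠ z in 𝓝 0, DifferentiableAt ℝ g z :=
    (hg.eventually (by simp)).mono fun z hz => hz.differentiableAt one_ne_zero
  refine ⟨fun z => 1 / 2 * Real.log (1 + g z ^ 2) + (E z).re, ?_, ?_⟩
  · have hlog : ContDiffAt ℝ 1 (fun z => Real.log (1 + g z ^ 2)) 0 :=
      (contDiffAt_const.add (hg.pow 2)).log (by positivity)
    exact (contDiffAt_const.mul hlog).add
      (reCLM.contDiff.contDiffAt.comp 0 hEan.restrictScalars.contDiffAt)
  filter_upwards [hE, hgd, hang] with z hEz hgz hangz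
  have hlog := ((hgz.hasFDerivAt.pow 2).const_add 1).log (by positivity)
  have hre : HasFDerivAt (fun z => (E z).re) _ z :=
    reCLM.hasFDerivAt.comp z (hEz.hasFDerivAt.restrictScalars ℝ)
  have hdslope : z * dslope a 0 z = a z := by
    simpa [ha0] using sub_smul_dslope a 0 z
  have hE' : (I * z * (dslope a 0 z / (I * β))).re = (a z).re / β := by
    rw [← hdslope, ← div_ofReal_re]
    field_simp
  have hdg : fderiv ℝ g z (I * z) = (1 + g z ^ 2) * (a z).im / β := by
    rw [eq_div_iff hβ, mul_comm, hangz]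
  have hne : 1 + g z ^ 2 ≠ 0 := by positivity
  rw [((hlog.const_mul (1 / 2)).fun_add hre).fderiv]
  simp only [_root_.add_apply, _root_.smul_apply, ContinuousLinearMap.comp_apply,
    ContinuousLinearMap.coe_restrictScalars', ContinuousLinearMap.toSpanSingleton_apply,
    reCLM_apply, smul_eq_mul, nsmul_eq_mul, hdg, hE']
  push_cast
  field_simp
  ring

end AngularPrimitive

section PowerCone

/-- The directions in which `z ^ m * γ` is a nonnegative real number. -/
def powerCone (m : ℕ) (γ : ℂ) : Set ℂ := {z | ‖γ‖ * ‖z‖ ^ m ≤ (z ^ m * γ).re}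

variable {m : ℕ} {γ z : ℂ}

theorem isClosed_powerCone (m : ℕ) (γ : ℂ) : IsClosed (powerCone m γ) :=
  isClosed_le (by fun_prop) (by fun_prop)

theorem ofReal_mul_mem_powerCone (hz : z ∈ powerCone m γ) {s : ℝ} (hs : 0 < s) :
    s * z ∈ powerCone m γ := by
  have h := mul_le_mul_of_nonneg_left (mem_ofPred.1 hz) (pow_nonneg hs.le m)
  have hre : ((s * z) ^ m * γ).re = s ^ m * (z ^ m * γ).re := by
    rw [mul_pow, mul_assoc, ← ofReal_pow, re_ofReal_mul]
  rw [powerCone, mem_ofPred, hre, norm_mul, norm_real, Real.norm_of_nonneg hs.le, mul_pow]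
  linarith

theorem exists_mem_powerCone_ne_zero (hm : m ≠ 0) (hγ : γ ≠ 0) : ∃ z ∈ powerCone m γ, z ≠ 0 := by
  obtain ⟨z, hz⟩ := IsAlgClosed.exists_pow_nat_eq (starRingEnd ℂ γ) (Nat.pos_of_ne_zero hm)
  refine ⟨z, ?_, fun h => hγ ?_⟩
  · rw [powerCone, mem_ofPred, ← norm_pow, hz, norm_conj, ← normSq_eq_conj_mul_self, ofReal_re,
      normSq_eq_norm_sq, sq]
  · simpa [h, hm] using hz.symm

theorem half_norm_mul_le_re_pow_mul (hz : z ∈ powerCone m γ) {w : ℂ}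
    (hw : ‖w - γ‖ ≤ ‖γ‖ / 2) : ‖γ‖ / 2 * ‖z‖ ^ m ≤ (z ^ m * w).re := by
  have herr : -(‖z‖ ^ m * (‖γ‖ / 2)) ≤ (z ^ m * (w - γ)).re := by
    refine (neg_le_neg ?_).trans (neg_le_of_abs_le (abs_re_le_norm _))
    rw [norm_mul, norm_pow]
    gcongr
  have hsum : (z ^ m * w).re = (z ^ m * γ).re + (z ^ m * (w - γ)).re := by
    rw [← add_re]; ring_nf
  have hz' : ‖γ‖ * ‖z‖ ^ m ≤ (z ^ m * γ).re := hz
  linarith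

end PowerCone

theorem IsFlat.not_isBigO_re_pow_mul_fderiv {P : ℂ → ℝ} {Γ : ℂ → ℂ} {m : ℕ} (hflat : IsFlat P)
    (hP : ∀ᶠ z in 𝓝 0, DifferentiableAt ℝ P z) (hpos : ∀ᶠ z in 𝓝[≠] 0, 0 < P z)
    (hΓ : ContinuousAt Γ 0) (hΓ0 : Γ 0 ≠ 0) (hm : m ≠ 0) :
    ¬ (fun z => (z ^ m * Γ z).re * fderiv ℝ P z z) =O[𝓝 0] fun z => P z * ‖z‖ ^ m := by
  intro hO
  obtain ⟨C, hC⟩ := hO.bound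
  have hγ : 0 < ‖Γ 0‖ := norm_pos_iff.2 hΓ0
  obtain ⟨K, hK⟩ := exists_nat_gt (C / (‖Γ 0‖ / 2))
  have hclose : ∀ᶠ z in 𝓝 0, ‖Γ z - Γ 0‖ ≤ ‖Γ 0‖ / 2 := by
    simpa [dist_eq_norm] using hΓ.eventually (closedBall_mem_nhds _ (half_pos hγ))
  have hmax := hflat.frequently_isMaxOn_sphere hP hpos (isClosed_powerCone m (Γ 0))
    (fun z hz s hs => ofReal_mul_mem_powerCone hz hs) (exists_mem_powerCone_ne_zero hm hΓ0) K
  obtain ⟨z, ⟨hzS, -, hrad⟩, hz0, hPz, hCz, hΓz⟩ := (hmax.and_eventually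
    (eventually_mem_nhdsWithin.and
      (hpos.and ((hC.and hclose).filter_mono nhdsWithin_le_nhds)))).exists
  have hzm : 0 < ‖z‖ ^ m := pow_pos (norm_pos_iff.2 hz0) m
  have hdP : 0 ≤ fderiv ℝ P z z := le_trans (by positivity) hrad
  rw [div_lt_iff₀ (half_pos hγ)] at hK
  have hupper : ‖Γ 0‖ / 2 * ‖z‖ ^ m * (K * P z) ≤ C * (P z * ‖z‖ ^ m) := calc
    _ ≤ (z ^ m * Γ z).re * fderiv ℝ P z z :=
      mul_le_mul (half_norm_mul_le_re_pow_mul hzS hΓz) hrad (by positivity)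
        (le_trans (by positivity) (half_norm_mul_le_re_pow_mul hzS hΓz))
    _ ≤ ‖(z ^ m * Γ z).re * fderiv ℝ P z z‖ := le_abs_self _
    _ ≤ C * (P z * ‖z‖ ^ m) := by simpa [abs_of_pos hPz] using hCz
  have hlower := mul_lt_mul_of_pos_right hK (mul_pos hPz hzm)
  linarith

section NodalDirections

variable {l m : ℕ}

theorem exists_polynomial_eval_eq_pow_mul
    (p : ContinuousMultilinearMap ℝ (fun _ : Fin l => ℂ) ℝ) :
    ∃ Q : Polynomial ℂ, Q.natDegree ≤ 2 * l ∧
      ∀ u : ℂ, ‖u‖ = 1 → Q.eval u = u ^ l * p fun _ => u := by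
  induction l with
  | zero =>
    refine ⟨Polynomial.C (p 0 : ℂ), by simp, fun u _ => ?_⟩
    simp [Subsingleton.elim (fun _ : Fin 0 => u) 0]
  | succ l ih =>
    obtain ⟨Q₁, hdeg₁, hQ₁⟩ := ih (p.curryLeft 1)
    obtain ⟨Q₂, hdeg₂, hQ₂⟩ := ih (p.curryLeft I)
    refine ⟨Polynomial.C (1 / 2) * (Polynomial.X ^ 2 + 1) * Q₁ +
      Polynomial.C (-I / 2) * (Polynomial.X ^ 2 - 1) * Q₂, ?_, fun u hu => ?_⟩
    · compute_degree
      omega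
    · have hsplit : p (fun _ => u) =
          u.re * p.curryLeft 1 (fun _ => u) + u.im * p.curryLeft I (fun _ => u) := by
        have hcons : p (fun _ => u) = p.curryLeft u (fun _ => u) :=
          congrArg p (Fin.cons_self_tail fun _ : Fin (l + 1) => u).symm
        have hlin : p.curryLeft u = u.re • p.curryLeft 1 + u.im • p.curryLeft I := by
          rw [← map_smul, ← map_smul, ← map_add]
          simp
        rw [hcons, hlin]
        simp
      have hconj : u * starRingEnd ℂ u = 1 := by rw [mul_conj, normSq_eq_norm_sq, hu]; simp
      have hre : u * u.re = 1 / 2 * (u ^ 2 + 1) := by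
        rw [re_eq_add_conj]
        linear_combination hconj / 2
      have him : u * u.im = -I / 2 * (u ^ 2 - 1) := by
        rw [im_eq_sub_conj, div_mul_eq_div_div_swap, div_I]
        linear_combination I / 2 * hconj
      simp only [Polynomial.eval_add, Polynomial.eval_mul, Polynomial.eval_C, Polynomial.eval_sub,
        Polynomial.eval_pow, Polynomial.eval_X, Polynomial.eval_one, hQ₁ u hu, hQ₂ u hu, ← hre,
        ← him, hsplit, ofReal_add, ofReal_mul]
      ring

theorem apply_diag_eq_zero_of_forall_re_pow_eq_zero
    (p : ContinuousMultilinearMap ℝ (fun _ : Fin l => ℂ) ℝ) (hl : l < m)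
    (hp : ∀ u : ℂ, ‖u‖ = 1 → (u ^ m).re = 0 → p (fun _ => u) = 0) (y : ℂ) :
    p (fun _ => y) = 0 := by
  obtain ⟨Q, hdeg, hQ⟩ := exists_polynomial_eval_eq_pow_mul p
  have hprim := isPrimitiveRoot_exp (2 * m) (by omega)
  have hcard : (Polynomial.nthRoots (2 * m) (-1 : ℂ)).toFinset.card = 2 * m := by
    rw [Multiset.toFinset_card_of_nodup (hprim.nthRoots_nodup (by simp)), hprim.card_nthRoots,
      if_pos (IsAlgClosed.exists_pow_nat_eq _ (by omega))]
  have hQ0 : Q = 0 := by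
    refine Polynomial.eq_zero_of_natDegree_lt_card_of_eval_eq_zero' Q
      (Polynomial.nthRoots (2 * m) (-1 : ℂ)).toFinset (fun u hu => ?_) (by omega)
    rw [Multiset.mem_toFinset, Polynomial.mem_nthRoots (by omega)] at hu
    have hunit : ‖u‖ = 1 := norm_eq_one_of_pow_eq_one (n := 4 * m) (by
      rw [show 4 * m = 2 * m * 2 by ring, pow_mul, hu]; norm_num) (by omega)
    have hre : (u ^ m).re = 0 := by
      have hsq : (u ^ m) ^ 2 = I ^ 2 := by rw [← pow_mul, mul_comm, hu, I_sq]
      rcases sq_eq_sq_iff_eq_or_eq_neg.1 hsq with h | h <;> simp [h]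
    rw [hQ u hunit, hp u hunit hre]
    simp
  have hunit : ∀ u : ℂ, ‖u‖ = 1 → p (fun _ => u) = 0 := fun u hu => by
    have hu0 : u ≠ 0 := norm_ne_zero_iff.1 (by simp [hu])
    simpa [hQ0, hu0] using hQ u hu
  have hpolar : (fun _ : Fin l => y) = fun _ => ‖y‖ • exp (y.arg * I) := by
    simp [norm_mul_exp_arg_mul_I]
  rw [hpolar, p.map_smul_univ (fun _ => ‖y‖), hunit _ (norm_exp_ofReal_mul_I _), smul_zero]

theorem apply_diag_eq_zero_of_isBigO_ray {E F : Type*} [NormedAddCommGroup E] [NormedSpace ℝ E]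
    [NormedAddCommGroup F] [NormedSpace ℝ F] {A : E → F} {p : FormalMultilinearSeries ℝ E F}
    {u : E} (hA : HasFPowerSeriesAt A p 0) (hlower : ∀ i < l, ∀ y, p i (fun _ => y) = 0)
    (hl : l < m) (hray : (fun r : ℝ => A (r • u)) =O[𝓝[>] 0] fun r => r ^ m) :
    p l (fun _ => u) = 0 := by
  have hru : Tendsto (fun r : ℝ => r • u) (𝓝[>] 0) (𝓝 0) := by
    have h : ContinuousAt (fun r : ℝ => r • u) 0 := by fun_prop
    simpa using h.tendsto.mono_left nhdsWithin_le_nhds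
  have hsmall : ∀ {k}, l < k → (fun r : ℝ => r ^ k) =o[𝓝[>] 0] fun r => r ^ l := fun hk =>
    (Asymptotics.isLittleO_pow_pow hk).mono nhdsWithin_le_nhds
  have hnorm : (fun r : ℝ => ‖r • u‖ ^ (l + 1)) =O[𝓝[>] 0] fun r => r ^ (l + 1) :=
    Asymptotics.IsBigO.of_bound (‖u‖ ^ (l + 1)) (Eventually.of_forall fun r => by
      simp [norm_smul, mul_pow, mul_comm])
  have hrest : (fun r : ℝ => A (r • u) - r ^ l • p l fun _ => u) =o[𝓝[>] 0] fun r => r ^ l := by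
    have h := (isBigO_sub_of_lower_terms_eq_zero hA hlower).comp_tendsto hru
    refine ((h.congr_left fun r => ?_).trans hnorm).trans_isLittleO (hsmall l.lt_succ_self)
    simpa using (p l).map_smul_univ (fun _ => r) fun _ => u
  have hlead : (fun r : ℝ => r ^ l • p l fun _ => u) =o[𝓝[>] 0] fun r => r ^ l := by
    simpa using (hray.trans_isLittleO (hsmall hl)).sub hrest
  have hlim := (hlead.norm_left).tendsto_div_nhds_zero
  refine norm_eq_zero.1 (tendsto_nhds_unique (tendsto_const_nhds.congr' ?_) hlim)
  filter_upwards [self_mem_nhdsWithin] with r hr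
  have hr0 : (0 : ℝ) < r := hr
  rw [norm_smul, norm_pow, Real.norm_of_nonneg hr0.le, mul_div_cancel_left₀ _ (by positivity)]

theorem isBigO_norm_pow_of_forall_ray {A : ℂ → ℝ} (hA : AnalyticAt ℝ A 0)
    (hray : ∀ u : ℂ, ‖u‖ = 1 → (u ^ m).re = 0 →
      (fun r : ℝ => A (r • u)) =O[𝓝[>] 0] fun r => r ^ m) :
    A =O[𝓝 0] fun z => ‖z‖ ^ m := by
  obtain ⟨p, hp⟩ := hA
  have hterm : ∀ j < m, ∀ y, p j (fun _ => y) = 0 := by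
    intro j
    induction j using Nat.strong_induction_on with
    | _ j ih =>
      exact fun hj => apply_diag_eq_zero_of_forall_re_pow_eq_zero (p j) hj fun u hu hum =>
        apply_diag_eq_zero_of_isBigO_ray hp (fun i hi => ih i hi (hi.trans hj)) hj (hray u hu hum)
  have hsum := hp.isBigO_sub_partialSum_pow m
  simpa [FormalMultilinearSeries.partialSum,
    Finset.sum_eq_zero fun j hj => hterm j (Finset.mem_range.1 hj) _] using hsum

theorem exists_analyticAt_leftInverse_rightInverse {𝕜 E F : Type*} [RCLike 𝕜]
    [NormedAddCommGroup E] [NormedSpace 𝕜 E] [CompleteSpace E] [NormedAddCommGroup F]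
    [NormedSpace 𝕜 F] [CompleteSpace F] {Φ : E → F} {e : E ≃L[𝕜] F} {x : E}
    (hΦ : AnalyticAt 𝕜 Φ x) (he : HasFDerivAt Φ (e : E →L[𝕜] F) x) :
    ∃ Ψ : F → E, AnalyticAt 𝕜 Ψ (Φ x) ∧ (∀ᶠ y in 𝓝 x, Ψ (Φ y) = y) ∧
      ∀ᶠ y in 𝓝 (Φ x), Φ (Ψ y) = y := by
  have hsmooth : ContDiffAt 𝕜 ⊤ Φ x := hΦ.contDiffAt
  have hstrict := hsmooth.hasStrictFDerivAt' he (by simp)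
  exact ⟨hsmooth.localInverse he (by simp),
    (hsmooth.to_localInverse he (by simp)).analyticAt,
    hstrict.eventually_left_inverse, hstrict.eventually_right_inverse⟩

theorem exists_analyticAt_pow_eq {Γ : ℂ → ℂ} (hΓ : AnalyticAt ℝ Γ 0) (hΓ0 : Γ 0 ≠ 0)
    (hm : m ≠ 0) :
    ∃ ψ : ℂ → ℂ, AnalyticAt ℝ ψ 0 ∧ ψ 0 ≠ 0 ∧ ∀ᶠ z in 𝓝 0, ψ z ^ m = Γ z := by
  obtain ⟨c, hc⟩ := IsAlgClosed.exists_pow_nat_eq (Γ 0) (Nat.pos_of_ne_zero hm)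
  have hc0 : c ≠ 0 := by
    rintro rfl
    exact hΓ0 (by rw [← hc, zero_pow hm])
  have hlog : AnalyticAt ℂ (fun w => c * exp (log (w / Γ 0) / m)) (Γ 0) := by
    refine analyticAt_const.mul (((analyticAt_id.div_const).clog ?_).div_const.cexp)
    simp [hΓ0]
  refine ⟨fun z => c * exp (log (Γ z / Γ 0) / m), hlog.restrictScalars.comp hΓ, ?_, ?_⟩
  · exact mul_ne_zero hc0 (exp_ne_zero _)
  · filter_upwards [hΓ.continuousAt.eventually_ne hΓ0] with z hz
    rw [mul_pow, hc, ← exp_nat_mul, mul_div_cancel₀ _ (Nat.cast_ne_zero.2 hm),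
      exp_log (div_ne_zero hz hΓ0), mul_div_cancel₀ _ hΓ0]

theorem exists_analyticAt_leftInverse_rightInverse_pow_eq {Γ : ℂ → ℂ} (hΓ : AnalyticAt ℝ Γ 0)
    (hΓ0 : Γ 0 ≠ 0) (hm : m ≠ 0) :
    ∃ Φ Ψ : ℂ → ℂ, AnalyticAt ℝ Φ 0 ∧ Φ 0 = 0 ∧ AnalyticAt ℝ Ψ 0 ∧
      (∀ᶠ z in 𝓝 0, Ψ (Φ z) = z) ∧ (∀ᶠ ζ in 𝓝 0, Φ (Ψ ζ) = ζ) ∧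
      ∀ᶠ z in 𝓝 0, Φ z ^ m = z ^ m * Γ z := by
  obtain ⟨ψ, hψ, hψ0, hpow⟩ := exists_analyticAt_pow_eq hΓ hΓ0 hm
  have hΦ : AnalyticAt ℝ (fun z => z * ψ z) 0 := analyticAt_id.mul hψ
  have hderiv : HasFDerivAt (fun z => z * ψ z)
      ((ContinuousLinearEquiv.unitsEquivAut ℂ (Units.mk0 (ψ 0) hψ0)).restrictScalars ℝ :
        ℂ →L[ℝ] ℂ) 0 := by
    refine ((hasFDerivAt_id (𝕜 := ℝ) (0 : ℂ)).mul
      hψ.differentiableAt.hasFDerivAt).congr_fderiv ?_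
    ext
    simp [mul_comm]
  obtain ⟨Ψ, hΨ, hleft, hright⟩ := exists_analyticAt_leftInverse_rightInverse hΦ hderiv
  rw [zero_mul] at hΨ hright
  refine ⟨_, Ψ, hΦ, zero_mul _, hΨ, hleft, hright, hpow.mono fun z hz => ?_⟩
  rw [mul_pow, hz]

theorem isBigO_comp_ray_of_isBigO_nodal {A : ℂ → ℝ} {Γ Φ Ψ : ℂ → ℂ} {u : ℂ} (hu : ‖u‖ = 1)
    (hum : (u ^ m).re = 0) (hΦ0 : Φ 0 = 0) (hΨ : Ψ =O[𝓝 0] fun ζ => ζ)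
    (hright : ∀ᶠ ζ in 𝓝 0, Φ (Ψ ζ) = ζ) (hpow : ∀ᶠ z in 𝓝 0, Φ z ^ m = z ^ m * Γ z)
    (hnodal : A =O[𝓝[{z | z ≠ 0 ∧ (z ^ m * Γ z).re = 0}] 0] fun z => ‖z‖ ^ m) :
    (fun r : ℝ => A (Ψ (r • u))) =O[𝓝[>] 0] fun r => r ^ m := by
  have hru : Tendsto (fun r : ℝ => r • u) (𝓝[>] 0) (𝓝 0) := by
    have h : ContinuousAt (fun r : ℝ => r • u) 0 := by fun_prop
    simpa using h.tendsto.mono_left nhdsWithin_le_nhds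
  have hcurve : Tendsto (fun r : ℝ => Ψ (r • u)) (𝓝[>] 0) (𝓝 0) :=
    (hΨ.trans_tendsto tendsto_id).comp hru
  have hmem : ∀ᶠ r : ℝ in 𝓝[>] 0,
      Ψ (r • u) ≠ 0 ∧ (Ψ (r • u) ^ m * Γ (Ψ (r • u))).re = 0 := by
    filter_upwards [hru.eventually hright, hcurve.eventually hpow, self_mem_nhdsWithin]
      with r hr hpowr hr0
    constructor
    · intro hzero
      rw [hzero, hΦ0] at hr
      exact smul_ne_zero (ne_of_gt hr0) (norm_ne_zero_iff.1 (by simp [hu])) hr.symm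
    · rw [← hpowr, hr, smul_pow, smul_re, hum, smul_zero]
  refine (hnodal.comp_tendsto (tendsto_nhdsWithin_iff.2 ⟨hcurve, hmem⟩)).trans ?_
  refine ((hΨ.comp_tendsto hru).norm_norm.pow m).trans (Asymptotics.IsBigO.of_bound 1 ?_)
  exact Eventually.of_forall fun r => by simp [hu]

-- Straighten the curves `re (z ^ m * Γ z) = 0` into rays.
theorem isBigO_norm_pow_of_isBigO_nodal {A : ℂ → ℝ} {Γ : ℂ → ℂ}
    (hA : AnalyticAt ℝ A 0) (hΓ : AnalyticAt ℝ Γ 0) (hΓ0 : Γ 0 ≠ 0)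
    (hnodal : A =O[𝓝[{z | z ≠ 0 ∧ (z ^ m * Γ z).re = 0}] 0] fun z => ‖z‖ ^ m) :
    A =O[𝓝 0] fun z => ‖z‖ ^ m := by
  rcases eq_or_ne m 0 with rfl | hm
  · simpa using hA.continuousAt.tendsto.isBigO_one ℝ
  obtain ⟨Φ, Ψ, hΦ, hΦ0, hΨ, hleft, hright, hpow⟩ :=
    exists_analyticAt_leftInverse_rightInverse_pow_eq hΓ hΓ0 hm
  have hΨ0 : Ψ 0 = 0 := by simpa [hΦ0] using hleft.self_of_nhds
  have hΦO : Φ =O[𝓝 0] fun z => z := by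
    simpa only [hΦ0, sub_zero] using hΦ.differentiableAt.isBigO_sub
  have hΨO : Ψ =O[𝓝 0] fun ζ => ζ := by
    simpa only [hΨ0, sub_zero] using hΨ.differentiableAt.isBigO_sub
  have hstraight : (fun ζ => A (Ψ ζ)) =O[𝓝 0] fun ζ => ‖ζ‖ ^ m :=
    isBigO_norm_pow_of_forall_ray ((hΨ0 ▸ hA).comp hΨ) fun u hu hum =>
      isBigO_comp_ray_of_isBigO_nodal hu hum hΦ0 hΨO hright hpow hnodal
  have hback : (fun z => A (Ψ (Φ z))) =O[𝓝 0] fun z => ‖z‖ ^ m :=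
    (hstraight.comp_tendsto (hΦO.trans_tendsto tendsto_id)).trans (hΦO.norm_norm.pow m)
  exact hback.congr' (hleft.mono fun z hz => congrArg A hz) EventuallyEq.rfl

end NodalDirections

section Holomorphic

variable {E F : Type*} [NormedAddCommGroup E] [NormedSpace ℂ E]
  [NormedAddCommGroup F] [NormedSpace ℂ F]

theorem exists_norm_fderiv_le_of_eventually_differentiableAt {h : E → F} {x : E}
    (hh : ∀ᶠ p in 𝓝 x, DifferentiableAt ℂ h p) :
    ∃ K, ∀ᶠ p in 𝓝 x, ‖fderiv ℂ h p‖ ≤ K := by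
  have hnear : ∀ᶠ p in 𝓝 x, h p ∈ ball (h x) 1 :=
    hh.self_of_nhds.continuousAt.eventually_mem (ball_mem_nhds _ one_pos)
  obtain ⟨δ, hδ, hball⟩ := Metric.eventually_nhds_iff_ball.1 (hh.and hnear)
  refine ⟨2 / (δ / 2), ?_⟩
  filter_upwards [ball_mem_nhds x (half_pos hδ)] with p hp
  have hsub : ball p (δ / 2) ⊆ ball x δ := ball_subset_ball' (by linarith [mem_ball.1 hp])
  refine norm_fderiv_le_div_of_mapsTo_ball
    (fun w hw => (hball w (hsub hw)).1.differentiableWithinAt) (fun w hw => ?_) (half_pos hδ)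
  have hw1 := (hball w (hsub hw)).2
  have hp1 := (hball p (hsub (mem_ball_self (half_pos hδ)))).2
  rw [mem_closedBall]
  linarith [dist_triangle_right (h w) (h p) (h x), mem_ball.1 hw1, mem_ball.1 hp1]

theorem differentiableAt_intervalIntegral_smul_comp_add [FiniteDimensional ℂ E]
    [FiniteDimensional ℂ F] {h : E → F} {x p : E}
    {δ K a b : ℝ} {c : ℝ → ℂ} {γ : ℝ → E} (hd : ∀ w ∈ ball x (δ + δ), DifferentiableAt ℂ h w)
    (hK : ∀ w ∈ ball x (δ + δ), ‖fderiv ℂ h w‖ ≤ K) (hc : Continuous c) (hγ : Continuous γ)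
    (hγδ : ∀ t, ‖γ t‖ < δ) (hp : p ∈ ball x δ) :
    DifferentiableAt ℂ (fun p => ∫ t in a..b, c t • h (p + γ t)) p := by
  borelize E
  have hmem : ∀ q ∈ ball x δ, ∀ t, q + γ t ∈ ball x (δ + δ) := fun q hq t => by
    rw [mem_ball, dist_eq_norm, add_sub_right_comm]
    exact (norm_add_le _ _).trans_lt (add_lt_add (mem_ball_iff_norm.1 hq) (hγδ t))
  have hcont : ∀ q ∈ ball x δ, Continuous fun t => c t • h (q + γ t) := fun q hq =>
    hc.smul (continuous_iff_continuousAt.2 fun t =>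
      (hd _ (hmem q hq t)).continuousAt.comp (f := fun t => q + γ t) (by fun_prop))
  have hball : ball x δ ∈ 𝓝 p := isOpen_ball.mem_nhds hp
  refine (intervalIntegral.hasFDerivAt_integral_of_dominated_of_fderiv_le (𝕜 := ℂ)
    (F' := fun q t => c t • fderiv ℂ h (q + γ t)) (bound := fun t => ‖c t‖ * K) hball
    ?_ ((hcont p hp).intervalIntegrable _ _) ?_ ?_ ?_ ?_).differentiableAt
  · filter_upwards [hball] with q hq using (hcont q hq).aestronglyMeasurable
  · borelize (E →L[ℂ] F)
    have : CompleteSpace F := FiniteDimensional.complete ℂ F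
    have : ProperSpace F := FiniteDimensional.proper ℂ F
    exact hc.aestronglyMeasurable.smul ((measurable_fderiv ℂ h).comp
      (continuous_const.add hγ).measurable).aestronglyMeasurable
  · refine .of_forall fun t _ q hq => ?_
    rw [norm_smul]
    gcongr
    exact hK _ (hmem q hq t)
  · exact (hc.norm.mul continuous_const).intervalIntegrable _ _
  · exact .of_forall fun t _ q hq =>
      ((hasFDerivAt_comp_add_right (γ t)).2 (hd _ (hmem q hq t)).hasFDerivAt).const_smul (c t)

theorem fderiv_apply_eq_circleIntegral [CompleteSpace F] {h : E → F} {p v : E} {r ε : ℝ}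
    (hr : 0 < r) (hrv : r * ‖v‖ < ε) (hd : ∀ w ∈ ball p ε, DifferentiableAt ℂ h w) :
    fderiv ℂ h p v = (2 * Real.pi * I : ℂ)⁻¹ • ∮ ζ in C(0, r), (ζ ^ 2)⁻¹ • h (p + ζ • v) := by
  have hline : ∀ ζ : ℂ, HasDerivAt (fun ζ : ℂ => p + ζ • v) v ζ := fun ζ => by
    simpa using ((hasDerivAt_id ζ).smul_const v).const_add p
  have hp : p ∈ ball p ε := mem_ball_self ((by positivity : 0 ≤ r * ‖v‖).trans_lt hrv)
  have hdiff : DifferentiableOn ℂ (fun ζ : ℂ => h (p + ζ • v))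
      ((fun ζ : ℂ => p + ζ • v) ⁻¹' ball p ε) :=
    fun ζ hζ => ((hd _ hζ).comp ζ (hline ζ).differentiableAt).differentiableWithinAt
  have hcauchy := two_pi_I_inv_smul_circleIntegral_sub_sq_inv_smul_of_differentiable
    (isOpen_ball.preimage (by fun_prop)) (c := 0) (R := r) (fun ζ hζ => ?_) hdiff (mem_ball_self hr)
  · simp only [sub_zero] at hcauchy
    rw [hcauchy]
    exact ((hd p hp).hasFDerivAt.comp_hasDerivAt_of_eq (0 : ℂ) (hline 0) (by simp)).deriv.symm
  · have hζr : ‖ζ‖ ≤ r := mem_closedBall_zero_iff.1 hζ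
    have : ‖ζ • v‖ ≤ r * ‖v‖ := by rw [norm_smul]; gcongr
    simpa using this.trans_lt hrv

theorem eventually_differentiableAt_fderiv_apply [FiniteDimensional ℂ E] [FiniteDimensional ℂ F]
    {h : E → F} {x : E} (hh : ∀ᶠ p in 𝓝 x, DifferentiableAt ℂ h p) (v : E) :
    ∀ᶠ p in 𝓝 x, DifferentiableAt ℂ (fun q => fderiv ℂ h q v) p := by
  have : CompleteSpace F := FiniteDimensional.complete ℂ F
  obtain ⟨K, hK⟩ := exists_norm_fderiv_le_of_eventually_differentiableAt hh
  obtain ⟨δ', hδ', hball⟩ := Metric.eventually_nhds_iff_ball.1 (hh.and hK)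
  obtain ⟨δ, hδ, rfl⟩ : ∃ δ, 0 < δ ∧ δ + δ = δ' := ⟨δ' / 2, half_pos hδ', add_halves δ'⟩
  obtain ⟨r, hr, hrv⟩ := exists_pos_mul_lt hδ ‖v‖
  rw [mul_comm] at hrv
  have hcauchy : ∀ p ∈ ball x δ, fderiv ℂ h p v =
      (2 * Real.pi * I : ℂ)⁻¹ • ∮ ζ in C(0, r), (ζ ^ 2)⁻¹ • h (p + ζ • v) := fun p hp =>
    fderiv_apply_eq_circleIntegral hr hrv fun w hw =>
      (hball w (ball_subset_ball' (by linarith [mem_ball.1 hp]) hw)).1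
  filter_upwards [ball_mem_nhds x hδ] with p hp
  refine DifferentiableAt.congr_of_eventuallyEq (.const_smul ?_ _)
    (Filter.eventuallyEq_of_mem (isOpen_ball.mem_nhds hp) hcauchy)
  simp only [circleIntegral, smul_smul, deriv_circleMap]
  refine differentiableAt_intervalIntegral_smul_comp_add (fun w hw => (hball w hw).1)
    (fun w hw => (hball w hw).2) ?_ (by fun_prop) (fun t => ?_) hp
  · exact (by fun_prop : Continuous fun t => circleMap 0 r t * I).mul
      (Continuous.inv₀ (by fun_prop) fun t => pow_ne_zero 2 (circleMap_ne_center hr.ne'))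
  · rwa [norm_smul, norm_circleMap_zero, abs_of_pos hr]

/-- The partial derivative `∂h/∂z₁` of a holomorphic function of `(z₁, z₂)`. -/
noncomputable def fstDeriv (h : ℂ × ℂ → ℂ) (p : ℂ × ℂ) : ℂ := fderiv ℂ h p (1, 0)

theorem hasDerivAt_fst {h : ℂ × ℂ → ℂ} {p : ℂ × ℂ} (hp : DifferentiableAt ℂ h p) :
    HasDerivAt (fun w => h (w, p.2)) (fstDeriv h p) p.1 :=
  hp.hasFDerivAt.comp_hasDerivAt p.1 ((hasDerivAt_id p.1).prodMk (hasDerivAt_const p.1 p.2))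

theorem analyticAt_slice_zero {h : ℂ × ℂ → ℂ} (hh : ∀ᶠ p in 𝓝 0, DifferentiableAt ℂ h p) :
    AnalyticAt ℂ (fun z => h (0, z)) 0 := by
  rw [analyticAt_iff_eventually_differentiableAt]
  have hslice : Tendsto (fun z : ℂ => ((0 : ℂ), z)) (𝓝 0) (𝓝 0) :=
    Continuous.tendsto' (by fun_prop) _ _ rfl
  filter_upwards [hslice.eventually hh] with z hz
  exact hz.comp z (by fun_prop : DifferentiableAt ℂ (fun z : ℂ => ((0 : ℂ), z)) z)

theorem isBigO_sub_slice_zero_of_hasDerivAt_fst {G G' : ℂ × ℂ → ℂ} {n : ℕ}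
    (hG : ∀ᶠ p in 𝓝 0, HasDerivAt (fun w => G (w, p.2)) (G' p) p.1)
    (hG' : G' =O[𝓝 0] fun p => p.1 ^ n) :
    (fun p => G p - G (0, p.2)) =O[𝓝 0] fun p => p.1 ^ (n + 1) := by
  obtain ⟨C, hC, hbound⟩ := hG'.exists_pos
  obtain ⟨δ, hδ, hball⟩ := Metric.eventually_nhds_iff_ball.1 (hG.and hbound.bound)
  refine Asymptotics.IsBigO.of_bound C ?_
  filter_upwards [ball_mem_nhds 0 hδ] with p hp
  have hmem : ∀ w ∈ closedBall (0 : ℂ) ‖p.1‖, (w, p.2) ∈ ball (0 : ℂ × ℂ) δ := fun w hw => by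
    rw [mem_ball_zero_iff] at hp ⊢
    exact (max_le_max_right _ (mem_closedBall_zero_iff.1 hw)).trans_lt hp
  have h := (convex_closedBall (0 : ℂ) ‖p.1‖).norm_image_sub_le_of_norm_hasDerivWithin_le
    (f := fun w => G (w, p.2)) (C := C * ‖p.1‖ ^ n) (x := 0) (y := p.1)
    (fun w hw => (hball _ (hmem w hw)).1.hasDerivWithinAt)
    (fun w hw => ((hball _ (hmem w hw)).2).trans (by
      rw [norm_pow]; gcongr; exact mem_closedBall_zero_iff.1 hw))
    (by simp) (by simp)
  simpa [pow_succ, mul_assoc] using h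

theorem isBigO_sub_slice_zero {h : ℂ × ℂ → ℂ} (hh : ∀ᶠ p in 𝓝 0, DifferentiableAt ℂ h p) :
    (fun p => h p - h (0, p.2)) =O[𝓝 0] Prod.fst := by
  have hcont : ContinuousAt (fstDeriv h) 0 :=
    (eventually_differentiableAt_fderiv_apply hh _).self_of_nhds.continuousAt
  simpa using isBigO_sub_slice_zero_of_hasDerivAt_fst (n := 0)
    (hh.mono fun p hp => hasDerivAt_fst hp) (by simpa using hcont.isBigO_one ℂ)

theorem isBigO_sub_slice_zero_sub_fstDeriv {h : ℂ × ℂ → ℂ}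
    (hh : ∀ᶠ p in 𝓝 0, DifferentiableAt ℂ h p) :
    (fun p => h p - h (0, p.2) - p.1 * fstDeriv h (0, p.2)) =O[𝓝 0] fun p => p.1 ^ 2 := by
  have hh' := isBigO_sub_slice_zero (eventually_differentiableAt_fderiv_apply hh (1, 0))
  have h2 := isBigO_sub_slice_zero_of_hasDerivAt_fst (n := 1)
    (G := fun p => h p - p.1 * fstDeriv h (0, p.2))
    (hh.mono fun p hp => (hasDerivAt_fst hp).sub
      ((hasDerivAt_id p.1).mul_const (fstDeriv h (0, p.2))))
    (by simpa [fstDeriv] using hh')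
  refine h2.congr_left fun p => ?_
  simp only [zero_mul, sub_zero]
  ring

end Holomorphic

section Tangency

theorem clm_apply_mul (D : ℂ →L[ℝ] ℝ) (l z : ℂ) :
    D (l * z) = l.re * D z + l.im * D (I * z) := by
  have hl : l * z = l.re • z + l.im • (I * z) := by
    simp only [real_smul]
    linear_combination z * (Complex.re_add_im l).symm
  rw [hl, map_add, map_smul, map_smul, smul_eq_mul, smul_eq_mul]

theorem re_mul_wDeriv (u : ℂ → ℝ) (z a : ℂ) : (a * wDeriv u z).re = fderiv ℝ u z a / 2 := by
  have h := clm_apply_mul (fderiv ℝ u z) a 1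
  rw [mul_one, mul_one] at h
  rw [h, wDeriv, ← mul_div_assoc, ← ofReal_ofNat, div_ofReal_re]
  simp

/-- The holomorphic vector field `h₁ ∂/∂z₁ + h₂ ∂/∂z₂` is tangent, near the origin, to the real
hypersurface `Re z₁ + P z₂ + F (z₂, Im z₁) = 0`. -/
def IsTangentNearZero (P : ℂ → ℝ) (F : ℂ × ℝ → ℝ) (h₁ h₂ : ℂ × ℂ → ℂ) : Prop :=
  ∀ᶠ p in 𝓝 (0 : ℂ × ℂ), p.1.re + P p.2 + F (p.2, p.1.im) = 0 →
    (h₁ p * wDeriv (fun w => w.re + P p.2 + F (p.2, w.im)) p.1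
      + h₂ p * wDeriv (fun w => p.1.re + P w + F (w, p.1.im)) p.2).re = 0

variable {P : ℂ → ℝ} {F : ℂ × ℝ → ℝ} {h₁ h₂ : ℂ × ℂ → ℂ}

theorem two_mul_re_wDeriv_add_eq {p : ℂ × ℂ} (hP : DifferentiableAt ℝ P p.2)
    (hF : DifferentiableAt ℝ F (p.2, p.1.im)) (x y : ℂ) :
    2 * (x * wDeriv (fun w => w.re + P p.2 + F (p.2, w.im)) p.1
        + y * wDeriv (fun w => p.1.re + P w + F (w, p.1.im)) p.2).re =
      x.re + fderiv ℝ P p.2 y + fderiv ℝ F (p.2, p.1.im) (y, x.im) := by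
  have hfst : HasFDerivAt (fun w : ℂ => w.re + P p.2 + F (p.2, w.im)) (reCLM +
      (fderiv ℝ F (p.2, p.1.im)).comp ((0 : ℂ →L[ℝ] ℂ).prod imCLM)) p.1 :=
    (reCLM.hasFDerivAt.add_const (P p.2)).add (hF.hasFDerivAt.comp p.1
      ((hasFDerivAt_const p.2 p.1).prodMk imCLM.hasFDerivAt))
  have hsnd : HasFDerivAt (fun w : ℂ => p.1.re + P w + F (w, p.1.im)) (fderiv ℝ P p.2 +
      (fderiv ℝ F (p.2, p.1.im)).comp ((ContinuousLinearMap.id ℝ ℂ).prod (0 : ℂ →L[ℝ] ℝ))) p.2 :=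
    (hP.hasFDerivAt.const_add p.1.re).add (hF.hasFDerivAt.comp p.2
      ((hasFDerivAt_id p.2).prodMk (hasFDerivAt_const p.1.im p.2)))
  have hsplit : fderiv ℝ F (p.2, p.1.im) (y, x.im) =
      fderiv ℝ F (p.2, p.1.im) (0, x.im) + fderiv ℝ F (p.2, p.1.im) (y, 0) := by
    rw [← map_add]; simp
  rw [add_re, re_mul_wDeriv, re_mul_wDeriv, hfst.fderiv, hsnd.fderiv, hsplit]
  simp only [_root_.add_apply, ContinuousLinearMap.comp_apply, ContinuousLinearMap.prod_apply,
    reCLM_apply, imCLM_apply, _root_.zero_apply, ContinuousLinearMap.id_apply]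
  ring

/-- The parametrization of the hypersurface `Re z₁ + P z₂ + F (z₂, Im z₁) = 0` by
`(z₂, Im z₁)`. -/
noncomputable def graphPoint (P : ℂ → ℝ) (F : ℂ × ℝ → ℝ) (q : ℂ × ℝ) : ℂ × ℂ :=
  (I * q.2 - P q.1 - F q, q.1)

theorem tendsto_graphPoint (hP : ContinuousAt P 0) (hP0 : P 0 = 0) (hF : ContinuousAt F 0)
    (hF0 : F 0 = 0) : Tendsto (graphPoint P F) (𝓝 0) (𝓝 0) := by
  have hPc : ContinuousAt (fun q : ℂ × ℝ => (P q.1 : ℂ)) 0 :=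
    continuous_ofReal.continuousAt.comp (hP.comp_of_eq continuousAt_fst rfl)
  have hFc : ContinuousAt (fun q : ℂ × ℝ => (F q : ℂ)) 0 := continuous_ofReal.continuousAt.comp hF
  have hcont : ContinuousAt (graphPoint P F) 0 := by unfold graphPoint; fun_prop
  have hzero : graphPoint P F 0 = 0 := by simp [graphPoint, hP0, hF0]
  rw [ContinuousAt, hzero] at hcont
  exact hcont

theorem IsTangentNearZero.eventually_graphPoint (hT : IsTangentNearZero P F h₁ h₂)
    (hP : ContDiffAt ℝ 2 P 0) (hP0 : P 0 = 0) (hF : AnalyticAt ℝ F 0) (hF0 : F 0 = 0) :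
    ∀ᶠ q in 𝓝 (0 : ℂ × ℝ), (h₁ (graphPoint P F q)).re + fderiv ℝ P q.1 (h₂ (graphPoint P F q)) +
      fderiv ℝ F q (h₂ (graphPoint P F q), (h₁ (graphPoint P F q)).im) = 0 := by
  have hPd : ∀ᶠ q in 𝓝 (0 : ℂ × ℝ), DifferentiableAt ℝ P q.1 :=
    (continuous_fst.tendsto' (0 : ℂ × ℝ) 0 rfl).eventually
      ((hP.eventually (by simp)).mono fun z hz => hz.differentiableAt (by norm_num))
  filter_upwards [(tendsto_graphPoint hP.continuousAt hP0 hF.continuousAt hF0).eventually hT, hPd,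
    hF.eventually_analyticAt] with q hq hPq hFq
  have him : (graphPoint P F q).1.im = q.2 := by simp [graphPoint]
  have hq' := two_mul_re_wDeriv_add_eq (p := graphPoint P F q) hPq
    (by rw [him]; exact hFq.differentiableAt) (h₁ (graphPoint P F q)) (h₂ (graphPoint P F q))
  rw [hq (by rw [him]; simp [graphPoint]; ring), him, mul_zero] at hq'
  exact hq'.symm

/-- The derivative `∂F/∂t (z, 0)` of the defining function in the direction of `Im z₁`. -/
noncomputable def imSlope (F : ℂ × ℝ → ℝ) (z : ℂ) : ℝ := fderiv ℝ F (z, 0) (0, 1)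

/-- The second derivative `∂²F/∂t² (z, 0)` in the direction of `Im z₁`. -/
noncomputable def imHessian (F : ℂ × ℝ → ℝ) (z : ℂ) : ℝ :=
  fderiv ℝ (fderiv ℝ F) (z, 0) (0, 1) (0, 1)

theorem analyticAt_clm_apply {X E G : Type*} [NormedAddCommGroup X] [NormedSpace ℝ X]
    [NormedAddCommGroup E] [NormedSpace ℝ E] [NormedAddCommGroup G] [NormedSpace ℝ G]
    {D : X → E →L[ℝ] G} {v : X → E} {x : X} (hD : AnalyticAt ℝ D x) (hv : AnalyticAt ℝ v x) :
    AnalyticAt ℝ (fun y => D y (v y)) x :=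
  AnalyticAt.fun_comp (f := fun y => (D y, v y))
    ((ContinuousLinearMap.id ℝ (E →L[ℝ] G)).analyticAt_bilinear (D x, v x)) (hD.prod hv)

theorem analyticAt_comp_prodMk_zero {G : Type*} [NormedAddCommGroup G] [NormedSpace ℝ G]
    {Φ : ℂ × ℝ → G} (hΦ : AnalyticAt ℝ Φ 0) : AnalyticAt ℝ (fun z => Φ (z, 0)) 0 :=
  AnalyticAt.fun_comp (f := fun z : ℂ => (z, (0 : ℝ))) hΦ (analyticAt_id.prod analyticAt_const)

theorem analyticAt_imSlope (hF : AnalyticAt ℝ F 0) : AnalyticAt ℝ (imSlope F) 0 :=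
  analyticAt_clm_apply (analyticAt_comp_prodMk_zero hF.fderiv) analyticAt_const

theorem analyticAt_imHessian (hF : AnalyticAt ℝ F 0) : AnalyticAt ℝ (imHessian F) 0 :=
  analyticAt_clm_apply (analyticAt_clm_apply (analyticAt_comp_prodMk_zero hF.fderiv.fderiv)
    analyticAt_const) analyticAt_const

theorem hasFDerivAt_prodMk_zero (z : ℂ) : HasFDerivAt (fun w : ℂ => (w, (0 : ℝ)))
    ((ContinuousLinearMap.id ℝ ℂ).prod (0 : ℂ →L[ℝ] ℝ)) z :=
  (hasFDerivAt_id z).prodMk (hasFDerivAt_const (0 : ℝ) z)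

theorem fderiv_apply_prodMk_zero {z : ℂ} (hF : DifferentiableAt ℝ F (z, 0))
    (hF0 : ∀ᶠ w in 𝓝 z, F (w, 0) = 0) (v : ℂ) : fderiv ℝ F (z, 0) (v, 0) = 0 := by
  have hcomp := hF.hasFDerivAt.comp z (hasFDerivAt_prodMk_zero z)
  have hzero : HasFDerivAt (F ∘ fun w : ℂ => (w, (0 : ℝ))) (0 : ℂ →L[ℝ] ℝ) z :=
    (hasFDerivAt_const (0 : ℝ) z).congr_of_eventuallyEq hF0
  simpa using DFunLike.congr_fun (hcomp.unique hzero) v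

theorem fderiv_imSlope_apply {z : ℂ} (hF : AnalyticAt ℝ F (z, 0)) (v : ℂ) :
    fderiv ℝ (imSlope F) z v = fderiv ℝ (fderiv ℝ F) (z, 0) (0, 1) (v, 0) := by
  have hcomp : HasFDerivAt (imSlope F) _ z := (hF.fderiv.differentiableAt.hasFDerivAt.comp z
    (hasFDerivAt_prodMk_zero z)).clm_apply (hasFDerivAt_const ((0 : ℂ), (1 : ℝ)) z)
  have hsymm := (hF.contDiffAt (n := 2)).isSymmSndFDerivAt (by simp) (v, 0) (0, 1)
  rw [← hsymm, hcomp.fderiv]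
  simp

theorem clm_apply_prodMk (L : ℂ × ℝ →L[ℝ] ℝ) (v : ℂ) (y : ℝ) :
    L (v, y) = L (v, 0) + y * L (0, 1) := by
  have hsplit : (v, y) = (v, 0) + y • ((0 : ℂ), (1 : ℝ)) := by simp
  rw [hsplit, map_add, map_smul, smul_eq_mul]

theorem eventually_re_add_eq_zero_on_slice (hF : AnalyticAt ℝ F 0)
    (hF0 : ∀ᶠ z in 𝓝 (0 : ℂ), F (z, 0) = 0)
    (hM : ∀ᶠ q in 𝓝 (0 : ℂ × ℝ), (h₁ (graphPoint P F q)).re +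
      fderiv ℝ P q.1 (h₂ (graphPoint P F q)) +
      fderiv ℝ F q (h₂ (graphPoint P F q), (h₁ (graphPoint P F q)).im) = 0) :
    ∀ᶠ z in 𝓝 (0 : ℂ), (h₁ (-P z, z)).re + imSlope F z * (h₁ (-P z, z)).im +
      fderiv ℝ P z (h₂ (-P z, z)) = 0 := by
  have hslice : Tendsto (fun z : ℂ => (z, (0 : ℝ))) (𝓝 0) (𝓝 0) :=
    Continuous.tendsto' (by fun_prop) _ _ rfl
  filter_upwards [hslice.eventually hM, hslice.eventually hF.eventually_analyticAt,
    hF0.eventually_nhds] with z hMz hFz hF0z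
  have hgraph : graphPoint P F (z, 0) = (-(P z : ℂ), z) := by simp [graphPoint, hF0z.self_of_nhds]
  rw [hgraph, clm_apply_prodMk, fderiv_apply_prodMk_zero hFz.differentiableAt hF0z] at hMz
  rw [imSlope]
  linear_combination hMz

theorem hasDerivAt_graphPoint_fst {z : ℂ} (hF : DifferentiableAt ℝ F (z, 0)) :
    HasDerivAt (fun t : ℝ => (graphPoint P F (z, t)).1) (I - imSlope F z) 0 := by
  have hFt : HasDerivAt (fun t : ℝ => F (z, t)) (imSlope F z) 0 :=
    hF.hasFDerivAt.comp_hasDerivAt (0 : ℝ) ((hasDerivAt_const (0 : ℝ) z).prodMk (hasDerivAt_id 0))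
  have hIt : HasDerivAt (fun t : ℝ => I * (t : ℂ)) (I * 1) 0 :=
    (ofRealCLM.hasDerivAt (x := (0 : ℝ))).const_mul I
  rw [mul_one] at hIt
  exact (hIt.sub_const (P z : ℂ)).sub hFt.ofReal_comp

theorem hasDerivAt_comp_graphPoint {h : ℂ × ℂ → ℂ} {z : ℂ} (hF : DifferentiableAt ℝ F (z, 0))
    (hh : DifferentiableAt ℂ h (graphPoint P F (z, 0))) :
    HasDerivAt (fun t : ℝ => h (graphPoint P F (z, t)))
      ((I - imSlope F z) * fstDeriv h (graphPoint P F (z, 0))) 0 :=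
  HasDerivAt.scomp (h := fun t : ℝ => (graphPoint P F (z, t)).1) (0 : ℝ) (hasDerivAt_fst hh)
    (hasDerivAt_graphPoint_fst hF)

theorem eventually_transverse_eq_zero_on_slice (hP : ContinuousAt P 0) (hP0 : P 0 = 0)
    (hF : AnalyticAt ℝ F 0)
    (hF0 : ∀ᶠ z in 𝓝 (0 : ℂ), F (z, 0) = 0)
    (hh₁ : ∀ᶠ p in 𝓝 0, DifferentiableAt ℂ h₁ p) (hh₂ : ∀ᶠ p in 𝓝 0, DifferentiableAt ℂ h₂ p)
    (hM : ∀ᶠ q in 𝓝 (0 : ℂ × ℝ), (h₁ (graphPoint P F q)).re +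
      fderiv ℝ P q.1 (h₂ (graphPoint P F q)) +
      fderiv ℝ F q (h₂ (graphPoint P F q), (h₁ (graphPoint P F q)).im) = 0) :
    ∀ᶠ z in 𝓝 (0 : ℂ), imHessian F z * (h₁ (-P z, z)).im -
      (1 + imSlope F z ^ 2) * (fstDeriv h₁ (-P z, z)).im +
      fderiv ℝ P z ((I - imSlope F z) * fstDeriv h₂ (-P z, z)) +
      fderiv ℝ (imSlope F) z (h₂ (-P z, z)) = 0 := by
  have hslice : Tendsto (fun z : ℂ => (z, (0 : ℝ))) (𝓝 0) (𝓝 0) :=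
    Continuous.tendsto' (by fun_prop) _ _ rfl
  have hgraph0 := (tendsto_graphPoint hP hP0 hF.continuousAt hF0.self_of_nhds).comp hslice
  filter_upwards [hM.curry_nhds, hslice.eventually hF.eventually_analyticAt, hF0.eventually_nhds,
    hgraph0.eventually hh₁, hgraph0.eventually hh₂] with z hMz hFz hF0z hd₁ hd₂
  have hD₁ := hasDerivAt_comp_graphPoint hFz.differentiableAt hd₁
  have hD₂ := hasDerivAt_comp_graphPoint hFz.differentiableAt hd₂
  have hDF : HasDerivAt (fun t : ℝ => fderiv ℝ F (z, t)) _ 0 :=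
    hFz.fderiv.differentiableAt.hasFDerivAt.comp_hasDerivAt (0 : ℝ)
      ((hasDerivAt_const (0 : ℝ) z).prodMk (hasDerivAt_id 0))
  have hre := reCLM.hasFDerivAt.comp_hasDerivAt (0 : ℝ) hD₁
  have him := imCLM.hasFDerivAt.comp_hasDerivAt (0 : ℝ) hD₁
  have hdP := (fderiv ℝ P z).hasFDerivAt.comp_hasDerivAt (0 : ℝ) hD₂
  have hzero := ((hre.add hdP).add (hDF.clm_apply (hD₂.prodMk him))).unique
    ((hasDerivAt_const (0 : ℝ) (0 : ℝ)).congr_of_eventuallyEq hMz)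
  have hgraph : graphPoint P F (z, 0) = (-(P z : ℂ), z) := by simp [graphPoint, hF0z.self_of_nhds]
  simp only [hgraph, Function.comp_apply] at hzero
  rw [clm_apply_prodMk, clm_apply_prodMk (fderiv ℝ F (z, 0)), ← fderiv_imSlope_apply hFz,
    fderiv_apply_prodMk_zero hFz.differentiableAt hF0z, ← imSlope, ← imHessian] at hzero
  rw [← hzero]
  simp only [reCLM_apply, imCLM_apply, mul_re, mul_im, sub_re, sub_im, I_re, I_im, ofReal_re,
    ofReal_im]
  ring

end Tangency

section SliceVanishing

theorem eventually_eq_zero_of_re_add_mul_im_eq_zero {a : ℂ → ℂ} {g : ℂ → ℝ} {z₀ : ℂ}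
    (ha : AnalyticAt ℂ a z₀) (hg : ContinuousAt g z₀) (hz₀ : a z₀ = 0)
    (h : ∀ᶠ z in 𝓝 z₀, (a z).re + g z * (a z).im = 0) : ∀ᶠ z in 𝓝 z₀, a z = 0 := by
  rcases ha.eventually_constant_or_nhds_le_map_nhds with hconst | hopen
  · simpa only [hz₀] using hconst
  -- A nonconstant `a` is open, but its values avoid the real axis away from `0`.
  have hcone : ∀ᶠ z in 𝓝 z₀, |(a z).re| ≤ (|g z₀| + 1) * |(a z).im| := by
    filter_upwards [h, hg.abs.eventually_le_const (lt_add_one |g z₀|)] with z hz hgz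
    rw [eq_neg_of_add_eq_zero_left hz, abs_neg, abs_mul]
    gcongr
  rw [hz₀] at hopen
  have hreal : Tendsto (fun ε : ℝ => (ε : ℂ)) (𝓝[>] 0) (𝓝 0) :=
    (continuous_ofReal.tendsto' 0 0 ofReal_zero).mono_left nhdsWithin_le_nhds
  obtain ⟨ε, hε, hε0⟩ :=
    ((hreal.eventually (hopen (eventually_map (P := fun w : ℂ => |w.re| ≤ _ * |w.im|).2 hcone))).and
      self_mem_nhdsWithin).exists
  simp only [ofReal_re, ofReal_im, abs_zero, mul_zero] at hε
  exact absurd (abs_nonpos_iff.mp hε) (ne_of_gt hε0)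

end SliceVanishing

section Substitution

variable {P : ℂ → ℝ} {h : ℂ × ℂ → ℂ}

theorem tendsto_neg_ofReal_prodMk (hP : Tendsto P (𝓝 0) (𝓝 0)) :
    Tendsto (fun z => (-(P z : ℂ), z)) (𝓝 0) (𝓝 (0 : ℂ × ℂ)) := by
  have hPc : Tendsto (fun z => -(P z : ℂ)) (𝓝 0) (𝓝 0) := by
    simpa using ((continuous_ofReal.tendsto 0).comp hP).neg
  exact hPc.prodMk_nhds tendsto_id

theorem isBigO_sub_comp_neg_ofReal (hP : Tendsto P (𝓝 0) (𝓝 0))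
    (hh : ∀ᶠ p in 𝓝 0, DifferentiableAt ℂ h p) :
    (fun z => h (-P z, z) - h (0, z)) =O[𝓝 0] P := by
  refine ((isBigO_sub_slice_zero hh).comp_tendsto (tendsto_neg_ofReal_prodMk hP)).trans ?_
  exact Asymptotics.isBigO_of_le _ fun z => by simp

theorem isBigO_sub_add_mul_comp_neg_ofReal (hP : Tendsto P (𝓝 0) (𝓝 0))
    (hh : ∀ᶠ p in 𝓝 0, DifferentiableAt ℂ h p) :
    (fun z => h (-P z, z) - h (0, z) + P z * fstDeriv h (0, z)) =O[𝓝 0] fun z => P z ^ 2 := by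
  have hsub := (isBigO_sub_slice_zero_sub_fstDeriv hh).comp_tendsto (tendsto_neg_ofReal_prodMk hP)
  refine (hsub.congr_left fun z => ?_).trans (Asymptotics.isBigO_of_le _ fun z => by simp)
  simp only [Function.comp_apply]
  ring

end Substitution

section Reduction

variable {P g e : ℂ → ℝ} {h₁ h₂ : ℂ × ℂ → ℂ} {β : ℝ}

/-- The 1-jet of `P`, whose norm bounds the terms of first order in `P`. -/
noncomputable def oneJet (P : ℂ → ℝ) (z : ℂ) : ℝ × (ℂ →L[ℝ] ℝ) := (P z, fderiv ℝ P z)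

theorem isBigO_oneJet_fst (P : ℂ → ℝ) (l : Filter ℂ) : P =O[l] oneJet P :=
  Asymptotics.isBigO_fst_prod

theorem isBigO_oneJet_snd (P : ℂ → ℝ) (l : Filter ℂ) : fderiv ℝ P =O[l] oneJet P :=
  Asymptotics.isBigO_snd_prod

theorem isBigO_clm_apply {E X : Type*} [NormedAddCommGroup E] [NormedSpace ℝ E] {l : Filter X}
    {D : X → E →L[ℝ] ℝ} {u : X → E} {v : X → ℝ} (hu : u =O[l] v) :
    (fun y => D y (u y)) =O[l] fun y => ‖D y‖ * v y :=
  (Asymptotics.isBigO_of_le (g := fun y => ‖D y‖ * ‖u y‖) l fun y => by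
    simpa using (D y).le_opNorm (u y)).trans ((Asymptotics.isBigO_refl _ l).mul hu.norm_left)

theorem isBigO_clm_apply_of_continuousAt {E X : Type*} [NormedAddCommGroup E] [NormedSpace ℝ E]
    [TopologicalSpace X] {x : X} {D : X → E →L[ℝ] ℝ} {u : X → E} {v : X → ℝ}
    (hD : ContinuousAt D x) (hu : u =O[𝓝 x] v) : (fun y => D y (u y)) =O[𝓝 x] v :=
  (isBigO_clm_apply hu).trans
    (by simpa using (hD.norm.isBigO_one ℝ).mul (Asymptotics.isBigO_refl v (𝓝 x)))

theorem clm_apply_sub_add (D : ℂ →L[ℝ] ℝ) (β p : ℝ) (w z b : ℂ) :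
    D (w - I * β * z + p * b) = D w - β * D (I * z) + p * D b := by
  have hrot : I * β * z = β • (I * z) := by rw [real_smul]; ring
  rw [hrot, ← real_smul, map_add, map_sub, map_smul, map_smul, smul_eq_mul, smul_eq_mul]

theorem isBigO_mul_im {u : ℂ → ℂ} {v : ℂ → ℝ} (hg : ContinuousAt g 0) (hu : u =O[𝓝 0] v) :
    (fun z => g z * (u z).im) =O[𝓝 0] v := by
  have him : (fun z => (u z).im) =O[𝓝 0] v :=
    (Asymptotics.isBigO_of_le _ fun z => abs_im_le_norm (u z)).trans hu
  simpa using (hg.isBigO_one ℝ).mul him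

theorem isBigO_re_add_mul_im {u : ℂ → ℂ} {v : ℂ → ℝ} (hg : ContinuousAt g 0)
    (hu : u =O[𝓝 0] v) : (fun z => (u z).re + g z * (u z).im) =O[𝓝 0] v :=
  ((Asymptotics.isBigO_of_le _ fun z => abs_re_le_norm (u z)).trans hu).add (isBigO_mul_im hg hu)

theorem analyticAt_re {a : ℂ → ℂ} (ha : AnalyticAt ℂ a 0) : AnalyticAt ℝ (fun z => (a z).re) 0 :=
  (reCLM.analyticAt _).comp ha.restrictScalars

theorem analyticAt_im {a : ℂ → ℂ} (ha : AnalyticAt ℂ a 0) : AnalyticAt ℝ (fun z => (a z).im) 0 :=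
  (imCLM.analyticAt _).comp ha.restrictScalars

theorem eventually_slice_eq_zero (hP : IsFlat (oneJet P)) (hg : AnalyticAt ℝ g 0)
    (hh₁ : ∀ᶠ p in 𝓝 0, DifferentiableAt ℂ h₁ p) (hh₁0 : h₁ 0 = 0) (hh₂ : ContinuousAt h₂ 0)
    (hre : ∀ᶠ z in 𝓝 (0 : ℂ), (h₁ (-P z, z)).re + g z * (h₁ (-P z, z)).im +
      fderiv ℝ P z (h₂ (-P z, z)) = 0) :
    ∀ᶠ z in 𝓝 (0 : ℂ), h₁ (0, z) = 0 := by
  have hP0 : Tendsto P (𝓝 0) (𝓝 0) :=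
    (hP.trans_isBigO (isBigO_oneJet_fst P _)).tendsto_zero
  have ha := analyticAt_slice_zero hh₁
  refine eventually_eq_zero_of_re_add_mul_im_eq_zero ha hg.continuousAt hh₁0 ?_
  refine IsFlat.eventually_eq_zero ?_ ((analyticAt_re ha).add (hg.mul (analyticAt_im ha)))
  have hdP : (fun z => fderiv ℝ P z (h₂ (-P z, z))) =O[𝓝 0] fderiv ℝ P := by
    have hone := (hh₂.tendsto.comp (tendsto_neg_ofReal_prodMk hP0)).isBigO_one ℝ
    simpa using isBigO_clm_apply (D := fderiv ℝ P) hone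
  have hrest := isBigO_re_add_mul_im hg.continuousAt (isBigO_sub_comp_neg_ofReal hP0 hh₁)
  refine hP.trans_isBigO (((hrest.trans (isBigO_oneJet_fst P _)).add
    (hdP.trans (isBigO_oneJet_snd P _))).neg_left.congr' ?_ .rfl)
  filter_upwards [hre] with z hz
  simp only [sub_re, sub_im]
  linear_combination -hz

theorem isBigO_angular (hP : ContinuousAt (fderiv ℝ P) 0) (hP0 : Tendsto P (𝓝 0) (𝓝 0))
    (hg : ContinuousAt g 0) (hh₁ : ∀ᶠ p in 𝓝 0, DifferentiableAt ℂ h₁ p)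
    (hh₂ : ∀ᶠ p in 𝓝 0, DifferentiableAt ℂ h₂ p)
    (hre : ∀ᶠ z in 𝓝 (0 : ℂ), (h₁ (-P z, z)).re + g z * (h₁ (-P z, z)).im +
      fderiv ℝ P z (h₂ (-P z, z)) = 0)
    (hslice₁ : ∀ᶠ z in 𝓝 (0 : ℂ), h₁ (0, z) = 0)
    (hslice₂ : ∀ᶠ z in 𝓝 (0 : ℂ), h₂ (0, z) = I * β * z) :
    (fun z => β * fderiv ℝ P z (I * z) -
      P z * ((fstDeriv h₁ (0, z)).re + g z * (fstDeriv h₁ (0, z)).im) -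
      P z * fderiv ℝ P z (fstDeriv h₂ (0, z))) =O[𝓝 0] fun z => P z ^ 2 := by
  refine ((isBigO_re_add_mul_im hg (isBigO_sub_add_mul_comp_neg_ofReal hP0 hh₁)).add
    (isBigO_clm_apply_of_continuousAt hP
      (isBigO_sub_add_mul_comp_neg_ofReal hP0 hh₂))).neg_left.congr' ?_ .rfl
  filter_upwards [hre, hslice₁, hslice₂] with z hz hz₁ hz₂
  rw [hz₁, hz₂, clm_apply_sub_add, sub_zero, add_re, add_im, re_ofReal_mul, im_ofReal_mul]
  linear_combination -hz

theorem isBigO_transverse (hP0 : Tendsto P (𝓝 0) (𝓝 0))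
    (hg : AnalyticAt ℝ g 0) (he : ContinuousAt e 0)
    (hh₁ : ∀ᶠ p in 𝓝 0, DifferentiableAt ℂ h₁ p) (hh₂ : ∀ᶠ p in 𝓝 0, DifferentiableAt ℂ h₂ p)
    (htr : ∀ᶠ z in 𝓝 (0 : ℂ), e z * (h₁ (-P z, z)).im -
      (1 + g z ^ 2) * (fstDeriv h₁ (-P z, z)).im +
      fderiv ℝ P z ((I - g z) * fstDeriv h₂ (-P z, z)) + fderiv ℝ g z (h₂ (-P z, z)) = 0)
    (hslice₁ : ∀ᶠ z in 𝓝 (0 : ℂ), h₁ (0, z) = 0)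
    (hslice₂ : ∀ᶠ z in 𝓝 (0 : ℂ), h₂ (0, z) = I * β * z) :
    (fun z => β * fderiv ℝ g z (I * z) - (1 + g z ^ 2) * (fstDeriv h₁ (0, z)).im +
      fderiv ℝ P z ((I - g z) * fstDeriv h₂ (0, z)) +
      P z * (-e z * (fstDeriv h₁ (0, z)).im + (1 + g z ^ 2) * (fstDeriv (fstDeriv h₁) (0, z)).im -
        fderiv ℝ g z (fstDeriv h₂ (0, z)))) =O[𝓝 0] fun z => P z * ‖oneJet P z‖ := by
  have hdg : ContinuousAt (fderiv ℝ g) 0 := hg.fderiv.continuousAt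
  have hgc : ContinuousAt g 0 := hg.continuousAt
  have hsq : (fun z => P z ^ 2) =O[𝓝 0] fun z => P z * ‖oneJet P z‖ := by
    simpa only [sq] using (Asymptotics.isBigO_refl P _).mul (isBigO_oneJet_fst P _).norm_right
  have hcross : (fun z => ‖fderiv ℝ P z‖ * P z) =O[𝓝 0] fun z => P z * ‖oneJet P z‖ := by
    simpa only [mul_comm] using
      (Asymptotics.isBigO_refl P _).mul (isBigO_oneJet_snd P _).norm_norm
  have hh₁' : ∀ᶠ p in 𝓝 0, DifferentiableAt ℂ (fstDeriv h₁) p :=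
    eventually_differentiableAt_fderiv_apply hh₁ (1, 0)
  have hh₂' : ∀ᶠ p in 𝓝 0, DifferentiableAt ℂ (fstDeriv h₂) p :=
    eventually_differentiableAt_fderiv_apply hh₂ (1, 0)
  have hnormal := isBigO_mul_im he (isBigO_sub_add_mul_comp_neg_ofReal hP0 hh₁)
  have hnormal' := isBigO_mul_im (g := fun z => 1 + g z ^ 2) (by fun_prop)
    (isBigO_sub_add_mul_comp_neg_ofReal hP0 hh₁')
  have hslope := isBigO_clm_apply_of_continuousAt hdg (isBigO_sub_add_mul_comp_neg_ofReal hP0 hh₂)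
  have hγ : (fun z => I - (g z : ℂ)) =O[𝓝 0] fun _ => (1 : ℝ) :=
    (ContinuousAt.tendsto (by fun_prop)).isBigO_one ℝ
  have htan := isBigO_clm_apply (D := fderiv ℝ P)
    (by simpa using hγ.mul (isBigO_sub_comp_neg_ofReal hP0 hh₂'))
  refine ((((hnormal.sub hnormal').add hslope).trans hsq).add
    (htan.trans hcross)).neg_left.congr' ?_ .rfl
  filter_upwards [htr, hslice₁, hslice₂] with z hz hz₁ hz₂
  rw [hz₁, hz₂, clm_apply_sub_add, mul_sub, map_sub]
  simp only [sub_zero, add_im, sub_im, im_ofReal_mul]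
  linear_combination -hz

end Reduction

section ReducedTangency

theorem isBigO_of_mul_left_isBigO {X : Type*} {l : Filter X} {p u v : X → ℝ}
    (hp : ∀ᶠ x in l, p x ≠ 0) (h : (fun x => p x * u x) =O[l] fun x => p x * v x) : u =O[l] v := by
  refine ((Asymptotics.isBigO_refl (fun x => (p x)⁻¹) l).mul h).congr' ?_ ?_ <;>
  · filter_upwards [hp] with x hx
    rw [inv_mul_cancel_left₀ hx]

theorem isBigO_im_pow_mul {Γ : ℂ → ℂ} (hΓ : ContinuousAt Γ 0) (m : ℕ) :
    (fun z => (z ^ m * Γ z).im) =O[𝓝 0] fun z => ‖z‖ ^ m := by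
  refine (Asymptotics.isBigO_of_le _ fun z => abs_im_le_norm _).trans ?_
  simpa using ((Asymptotics.isBigO_refl (fun z : ℂ => z ^ m) (𝓝 0)).norm_right.mul
    (hΓ.isBigO_one ℝ))

theorem I_sub_ofReal_ne_zero (x : ℝ) : I - x ≠ 0 := fun h => by
  simpa using congrArg im h

theorem isBigO_clm_apply_mul {X : Type*} {l : Filter X} {D : X → ℂ →L[ℝ] ℝ} {u w : X → ℂ}
    {v : X → ℝ} (hw : w =O[l] fun _ => (1 : ℝ)) (hu : (fun x => D x (u x)) =O[l] v)
    (hIu : (fun x => D x (I * u x)) =O[l] v) : (fun x => D x (w x * u x)) =O[l] v := by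
  have hre : (fun x => (w x).re) =O[l] fun _ => (1 : ℝ) :=
    (Asymptotics.isBigO_of_le _ fun x => abs_re_le_norm _).trans hw
  have him : (fun x => (w x).im) =O[l] fun _ => (1 : ℝ) :=
    (Asymptotics.isBigO_of_le _ fun x => abs_im_le_norm _).trans hw
  refine (Asymptotics.IsBigO.add ?_ ?_).congr_left fun x => (clm_apply_mul (D x) (w x) (u x)).symm
  · simpa using hre.mul hu
  · simpa using him.mul hIu

theorem eventually_nonneg_of_pos_punctured {P : ℂ → ℝ} (hpos : ∀ᶠ z in 𝓝[≠] 0, 0 < P z)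
    (hP0 : P 0 = 0) : ∀ᶠ z in 𝓝 0, 0 ≤ P z := by
  filter_upwards [eventually_nhdsWithin_iff.1 hpos] with z hz
  rcases eq_or_ne z 0 with rfl | hz0
  · exact hP0.ge
  · exact (hz hz0).le

theorem IsFlat.oneJet {P : ℂ → ℝ} (hflat : IsFlat P) (hP : ContDiffAt ℝ 2 P 0)
    (hpos : ∀ᶠ z in 𝓝[≠] 0, 0 < P z) : IsFlat (oneJet P) := fun n =>
  (hflat n).prod_left
    (hflat.fderiv_of_nonneg hP (eventually_nonneg_of_pos_punctured hpos hflat.apply_zero) n)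

/-- What tangency of a holomorphic field to `Re z₁ + P z₂ + F (z₂, Im z₁) = 0` leaves at first
order in `P` along `z₁ = 0`: `a` and `b` stand for the restrictions of `∂h₁/∂z₁` and `∂h₂/∂z₁`,
`g` for the restriction of the derivative of `F` in `Im z₁`, and `A` collects the analytic
coefficients of `P` in the derivative of the tangency equation transverse to the slice. -/
structure ReducedTangency (P g A : ℂ → ℝ) (a b : ℂ → ℂ) (β : ℝ) : Prop where
  contDiffAt : ContDiffAt ℝ 2 P 0
  eventually_pos : ∀ᶠ z in 𝓝[≠] 0, 0 < P z
  isFlat : IsFlat P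
  analyticAt_slope : AnalyticAt ℝ g 0
  analyticAt_remainder : AnalyticAt ℝ A 0
  analyticAt_fst : AnalyticAt ℂ a 0
  analyticAt_snd : AnalyticAt ℂ b 0
  ne_zero : β ≠ 0
  angular : (fun z => β * fderiv ℝ P z (I * z) - P z * ((a z).re + g z * (a z).im) -
    P z * fderiv ℝ P z (b z)) =O[𝓝 0] fun z => P z ^ 2
  transverse : (fun z => β * fderiv ℝ g z (I * z) - (1 + g z ^ 2) * (a z).im +
    fderiv ℝ P z ((I - g z) * b z) + P z * A z) =O[𝓝 0] fun z => P z * ‖oneJet P z‖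

namespace ReducedTangency

variable {P g A : ℂ → ℝ} {a b c : ℂ → ℂ} {β : ℝ} {m : ℕ}

theorem isFlat_oneJet (T : ReducedTangency P g A a b β) : IsFlat (oneJet P) :=
  T.isFlat.oneJet T.contDiffAt T.eventually_pos

theorem eventually_differentiableAt (T : ReducedTangency P g A a b β) :
    ∀ᶠ z in 𝓝 0, DifferentiableAt ℝ P z :=
  (T.contDiffAt.eventually (by simp)).mono fun _ hz => hz.differentiableAt two_ne_zero

theorem continuousAt_transverse (T : ReducedTangency P g A a b β) :
    ContinuousAt (fun z => (I - g z) * b z) 0 := by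
  have := T.analyticAt_slope.continuousAt
  have := T.analyticAt_snd.continuousAt
  fun_prop

theorem eventually_angular_slope (T : ReducedTangency P g A a b β) :
    ∀ᶠ z in 𝓝 0, β * fderiv ℝ g z (I * z) = (1 + g z ^ 2) * (a z).im := by
  have hg := T.analyticAt_slope
  have hanalytic : AnalyticAt ℝ
      (fun z => β * fderiv ℝ g z (I * z) - (1 + g z ^ 2) * (a z).im) 0 :=
    (analyticAt_const.mul (analyticAt_clm_apply hg.fderiv (analyticAt_const.mul analyticAt_id))).sub
      ((analyticAt_const.add (hg.pow 2)).mul (analyticAt_im T.analyticAt_fst))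
  have hjet : (fun z => P z * ‖oneJet P z‖) =O[𝓝 0] oneJet P := by
    simpa using (T.contDiffAt.continuousAt.isBigO_one ℝ).mul
      (Asymptotics.isBigO_refl (oneJet P) _).norm_norm
  have htan : (fun z => fderiv ℝ P z ((I - g z) * b z)) =O[𝓝 0] oneJet P := by
    refine (isBigO_clm_apply (T.continuousAt_transverse.isBigO_one ℝ)).trans ?_
    simpa using (isBigO_oneJet_snd P (𝓝 0)).norm_left
  have hPA : (fun z => P z * A z) =O[𝓝 0] oneJet P := by
    simpa using (isBigO_oneJet_fst P (𝓝 0)).norm_right.mul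
      (T.analyticAt_remainder.continuousAt.isBigO_one ℝ)
  have hbigO := (((T.transverse.trans hjet).sub htan).sub hPA).congr_left fun z =>
    show _ = β * fderiv ℝ g z (I * z) - (1 + g z ^ 2) * (a z).im by ring
  filter_upwards [(T.isFlat_oneJet.trans_isBigO hbigO).eventually_eq_zero hanalytic] with z hz
    using sub_eq_zero.1 hz

theorem isBigO_fderiv_transverse_add (T : ReducedTangency P g A a b β) :
    (fun z => fderiv ℝ P z ((I - g z) * b z) + P z * A z) =O[𝓝 0] fun z => P z * ‖oneJet P z‖ := by
  refine T.transverse.congr' ?_ .rfl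
  filter_upwards [T.eventually_angular_slope] with z hz
  linear_combination hz

theorem continuousAt_angular_coeff (T : ReducedTangency P g A a b β) :
    ContinuousAt (fun z => (a z).re + g z * (a z).im + fderiv ℝ P z (b z)) 0 := by
  have := T.analyticAt_slope.continuousAt
  have := T.analyticAt_fst.continuousAt
  have := T.analyticAt_snd.continuousAt
  have : ContinuousAt (fderiv ℝ P) 0 := T.contDiffAt.continuousAt_fderiv two_ne_zero
  fun_prop

theorem isBigO_sub_mul_angular_coeff (T : ReducedTangency P g A a b β) :
    (fun z => β * fderiv ℝ P z (I * z) -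
      P z * ((a z).re + g z * (a z).im + fderiv ℝ P z (b z))) =O[𝓝 0] fun z => P z * P z :=
  T.angular.congr (fun z => by ring) fun z => sq (P z)

theorem isBigO_fderiv_I_mul (T : ReducedTangency P g A a b β) :
    (fun z => fderiv ℝ P z (I * z)) =O[𝓝 0] P := by
  have hP := Asymptotics.isBigO_refl P (𝓝 0)
  have hsq : (fun z => P z * P z) =O[𝓝 0] P := by
    simpa using hP.mul (T.contDiffAt.continuousAt.isBigO_one ℝ)
  have hcoeff : (fun z => P z * ((a z).re + g z * (a z).im + fderiv ℝ P z (b z))) =O[𝓝 0] P := by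
    simpa using hP.mul (T.continuousAt_angular_coeff.isBigO_one ℝ)
  refine (Asymptotics.isBigO_const_mul_left_iff T.ne_zero).1 ?_
  exact ((T.isBigO_sub_mul_angular_coeff.trans hsq).add hcoeff).congr_left fun z =>
    sub_add_cancel _ _

-- The angular equation is divided by `P` at the points where `P` is maximal on its circle.
theorem apply_zero_eq_zero (T : ReducedTangency P g A a b β) : a 0 = 0 := by
  have him : (a 0).im = 0 := by
    have h := T.eventually_angular_slope.self_of_nhds
    have hpos : 0 < 1 + g 0 ^ 2 := by positivity
    simpa [hpos.ne'] using h
  let S := {z | fderiv ℝ P z (I * z) = 0}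
  have hne : (𝓝[≠] 0 ⊓ 𝓟 S).NeBot := frequently_iff_neBot.1 <|
    (T.isFlat.frequently_fderiv_I_mul_eq_zero T.eventually_differentiableAt T.eventually_pos 0).mono
      fun z hz => hz.1
  have hle : 𝓝[≠] (0 : ℂ) ⊓ 𝓟 S ≤ 𝓝 0 := inf_le_left.trans nhdsWithin_le_nhds
  have hcoeff : (fun z => (a z).re + g z * (a z).im + fderiv ℝ P z (b z))
      =O[𝓝[≠] 0 ⊓ 𝓟 S] P := by
    refine isBigO_of_mul_left_isBigO
      ((T.eventually_pos.filter_mono inf_le_left).mono fun z hz => hz.ne')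
      ((T.isBigO_sub_mul_angular_coeff.mono hle).neg_left.congr' ?_ .rfl)
    filter_upwards [mem_inf_of_right (mem_principal_self S)] with z hz
    rw [show fderiv ℝ P z (I * z) = 0 from hz]
    ring
  have hlim := hcoeff.trans_tendsto (T.isFlat.tendsto_zero.mono_left hle)
  have hre := tendsto_nhds_unique (T.continuousAt_angular_coeff.tendsto.mono_left hle) hlim
  have hdP : fderiv ℝ P 0 = 0 := T.isFlat.hasFDerivAt_zero.fderiv
  exact Complex.ext (by simpa [him, hdP] using hre) him

theorem isBigO_fderiv_transverse (T : ReducedTangency P g A a b β)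
    (hA : A =O[𝓝 0] fun z => ‖z‖ ^ m) :
    (fun z => fderiv ℝ P z ((I - g z) * b z)) =O[𝓝 0] fun z => P z * ‖z‖ ^ m := by
  have hjet : (fun z => P z * ‖oneJet P z‖) =O[𝓝 0] fun z => P z * ‖z‖ ^ m :=
    (Asymptotics.isBigO_refl P _).mul (T.isFlat_oneJet m).isBigO.norm_left
  simpa using (T.isBigO_fderiv_transverse_add.trans hjet).sub
    ((Asymptotics.isBigO_refl P _).mul hA)

-- In the null directions of `Re (z ^ m * c z * (I - g z))` the transverse equation only sees the
-- rotational derivative of `P`.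
theorem isBigO_remainder (T : ReducedTangency P g A a b β) (hc : AnalyticAt ℂ c 0) (hc0 : c 0 ≠ 0)
    (hb : ∀ᶠ z in 𝓝 0, b z = z ^ (m + 1) * c z) : A =O[𝓝 0] fun z => ‖z‖ ^ m := by
  have hg := T.analyticAt_slope
  have hΓ : AnalyticAt ℝ (fun z => (I - g z) * c z) 0 :=
    (analyticAt_const.sub ((ofRealCLM.analyticAt _).comp hg)).mul hc.restrictScalars
  refine isBigO_norm_pow_of_isBigO_nodal T.analyticAt_remainder hΓ
    (mul_ne_zero (I_sub_ofReal_ne_zero _) hc0) ?_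
  set l := 𝓝[{z : ℂ | z ≠ 0 ∧ (z ^ m * ((I - g z) * c z)).re = 0}] 0
  have hle : l ≤ 𝓝 0 := nhdsWithin_le_nhds
  have hP := Asymptotics.isBigO_refl P l
  have hpos : ∀ᶠ z in l, P z ≠ 0 :=
    (T.eventually_pos.filter_mono (nhdsWithin_mono _ fun _ hz => hz.1)).mono fun z hz => hz.ne'
  have hjet : (fun z => P z * ‖oneJet P z‖) =O[l] fun z => P z * ‖z‖ ^ m :=
    hP.mul ((T.isFlat_oneJet m).isBigO.norm_left.mono hle)
  have him : (fun z => (z ^ m * ((I - g z) * c z)).im) =O[l] fun z => ‖z‖ ^ m :=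
    (isBigO_im_pow_mul hΓ.continuousAt m).mono hle
  have hrot := (T.isBigO_fderiv_I_mul.mono hle).mul him
  refine isBigO_of_mul_left_isBigO hpos
    (((T.isBigO_fderiv_transverse_add.mono hle).trans hjet).sub hrot |>.congr' ?_ .rfl)
  filter_upwards [hb.filter_mono hle, self_mem_nhdsWithin] with z hbz hz
  rw [hbz, show (I - g z) * (z ^ (m + 1) * c z) = z ^ m * ((I - g z) * c z) * z by ring,
    clm_apply_mul, hz.2]
  ring

theorem not_eventually_eq_pow_succ_mul (T : ReducedTangency P g A a b β)
    (hc : AnalyticAt ℂ c 0) (hc0 : c 0 ≠ 0) (hm : m ≠ 0) :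
    ¬ ∀ᶠ z in 𝓝 0, b z = z ^ (m + 1) * c z := by
  intro hb
  have hΓ : ContinuousAt (fun z => (I - g z) * c z) 0 := by
    have := T.analyticAt_slope.continuousAt
    have := hc.continuousAt
    fun_prop
  refine T.isFlat.not_isBigO_re_pow_mul_fderiv T.eventually_differentiableAt T.eventually_pos hΓ
    (mul_ne_zero (I_sub_ofReal_ne_zero _) hc0) hm ?_
  have him : (fun z => (z ^ m * ((I - g z) * c z)).im) =O[𝓝 0] fun z => ‖z‖ ^ m :=
    isBigO_im_pow_mul hΓ m
  refine ((T.isBigO_fderiv_transverse (T.isBigO_remainder hc hc0 hb)).sub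
    (T.isBigO_fderiv_I_mul.mul him)).congr' ?_ .rfl
  filter_upwards [hb] with z hz
  rw [hz, show (I - g z) * (z ^ (m + 1) * c z) = z ^ m * ((I - g z) * c z) * z by ring,
    clm_apply_mul]
  ring

-- At the chosen points the angular equation loses its first-order terms, hence controls `dP(b)`.
theorem not_isBigO_id (T : ReducedTangency P g A a b β) : ¬ (fun z => z) =O[𝓝 0] b := by
  intro hzb
  obtain ⟨q, hq, hangular⟩ := exists_contDiffAt_mul_fderiv_I_mul_eq
    (T.analyticAt_slope.contDiffAt) T.analyticAt_fst T.apply_zero_eq_zero T.ne_zero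
    T.eventually_angular_slope
  let S := {z | fderiv ℝ P z (I * z) = P z * fderiv ℝ q z (I * z)}
  set l := 𝓝[≠] (0 : ℂ) ⊓ 𝓟 S
  have hle : l ≤ 𝓝 0 := inf_le_left.trans nhdsWithin_le_nhds
  have hpos : ∀ᶠ z in l, 0 < P z := T.eventually_pos.filter_mono inf_le_left
  have hb : (fun z => fderiv ℝ P z (b z)) =O[l] P := by
    refine isBigO_of_mul_left_isBigO (hpos.mono fun z hz => hz.ne')
      ((T.isBigO_sub_mul_angular_coeff.mono hle).neg_left.congr' ?_ .rfl)
    filter_upwards [mem_inf_of_right (mem_principal_self S), hangular.filter_mono hle] with z hz hqz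
    rw [show fderiv ℝ P z (I * z) = _ from hz]
    linear_combination -P z * hqz
  have hIb : (fun z => fderiv ℝ P z (I * b z)) =O[l] P := by
    have hA : A =O[𝓝 0] fun z => ‖z‖ ^ 0 := by
      simpa using T.analyticAt_remainder.continuousAt.isBigO_one ℝ
    have htr : (fun z => fderiv ℝ P z ((I - g z) * b z)) =O[l] P := by
      simpa using (T.isBigO_fderiv_transverse hA).mono hle
    have hgb : (fun z => g z * fderiv ℝ P z (b z)) =O[l] P := by
      simpa using ((T.analyticAt_slope.continuousAt.isBigO_one ℝ).mono hle).mul hb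
    refine (htr.add hgb).congr_left fun z => ?_
    rw [sub_mul, map_sub, ← real_smul, map_smul, smul_eq_mul, sub_add_cancel]
  have hself : (fun z => fderiv ℝ P z z) =O[l] P := by
    obtain ⟨w, hw, hwb⟩ := (hzb.mono hle).exists_eq_mul
    refine (isBigO_clm_apply_mul (w := w) ?_ hb hIb).congr' ?_ .rfl
    · exact hw.isBigO_one ℝ
    · filter_upwards [hwb] with z hz
      rw [← Pi.mul_apply, ← hz]
  obtain ⟨C, hC⟩ := hself.bound
  have hfreq := T.isFlat.frequently_fderiv_I_mul_eq_mul T.eventually_differentiableAt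
    T.eventually_pos hq C
  obtain ⟨z, ⟨hzS, hlt⟩, hPz, hCz⟩ := (hfreq.and_eventually
    (T.eventually_pos.and (eventually_inf_principal.1 hC))).exists
  have hCz' := (le_abs_self _).trans (hCz hzS)
  rw [Real.norm_of_nonneg hPz.le] at hCz'
  exact hlt.not_ge hCz'

theorem eventually_snd_eq_zero (T : ReducedTangency P g A a b β) : ∀ᶠ z in 𝓝 0, b z = 0 := by
  by_contra hb
  obtain ⟨k, c, hc, hc0, hbc⟩ := (T.analyticAt_snd.exists_eventuallyEq_pow_smul_nonzero_iff).2 hb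
  simp only [sub_zero, smul_eq_mul] at hbc
  rcases Nat.lt_or_ge k 2 with hk | hk
  · refine absurd ?_ T.not_isBigO_id
    have hbounded : (fun z => z ^ (1 - k) * (c z)⁻¹) =O[𝓝 0] fun _ => (1 : ℂ) :=
      ((continuousAt_id.pow _).mul (hc.continuousAt.inv₀ hc0)).isBigO_one ℂ
    refine (hbounded.mul (Asymptotics.isBigO_refl b _)).congr' ?_ (.of_eq (by simp))
    filter_upwards [hbc, hc.continuousAt.eventually_ne hc0] with z hz hcz
    rw [hz, mul_mul_mul_comm, inv_mul_cancel₀ hcz, mul_one, ← pow_add,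
      Nat.sub_add_cancel (Nat.le_of_lt_succ hk), pow_one]
  · obtain ⟨m, rfl⟩ := Nat.exists_eq_add_of_le' hk
    exact T.not_eventually_eq_pow_succ_mul hc hc0 m.succ_ne_zero hbc

end ReducedTangency

end ReducedTangency

theorem IsTangentNearZero.exists_reducedTangency {P : ℂ → ℝ} {F : ℂ × ℝ → ℝ} {h₁ h₂ : ℂ × ℂ → ℂ}
    {β : ℝ} (hT : IsTangentNearZero P F h₁ h₂) (hP : ContDiffAt ℝ 2 P 0)
    (hpos : ∀ᶠ z in 𝓝[≠] 0, 0 < P z) (hflat : IsFlat P) (hF : AnalyticAt ℝ F 0)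
    (hF0 : ∀ᶠ z in 𝓝 0, F (z, 0) = 0) (hh₁ : ∀ᶠ p in 𝓝 0, DifferentiableAt ℂ h₁ p)
    (hh₂ : ∀ᶠ p in 𝓝 0, DifferentiableAt ℂ h₂ p) (hh₁0 : h₁ 0 = 0) (hβ : β ≠ 0)
    (hnorm : ∀ᶠ z in 𝓝 0, h₂ (0, z) = I * β * z) :
    ∃ g A, ReducedTangency P g A (fun z => fstDeriv h₁ (0, z)) (fun z => fstDeriv h₂ (0, z)) β := by
  have hP0 := hflat.tendsto_zero
  have hM := hT.eventually_graphPoint hP hflat.apply_zero hF hF0.self_of_nhds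
  have hre := eventually_re_add_eq_zero_on_slice hF hF0 hM
  have htr := eventually_transverse_eq_zero_on_slice hP.continuousAt hflat.apply_zero hF hF0
    hh₁ hh₂ hM
  have hg := analyticAt_imSlope hF
  have he := analyticAt_imHessian hF
  have hh₁' : ∀ᶠ p in 𝓝 0, DifferentiableAt ℂ (fstDeriv h₁) p :=
    eventually_differentiableAt_fderiv_apply hh₁ (1, 0)
  have hh₁'' : ∀ᶠ p in 𝓝 0, DifferentiableAt ℂ (fstDeriv (fstDeriv h₁)) p :=
    eventually_differentiableAt_fderiv_apply hh₁' (1, 0)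
  have hh₂' : ∀ᶠ p in 𝓝 0, DifferentiableAt ℂ (fstDeriv h₂) p :=
    eventually_differentiableAt_fderiv_apply hh₂ (1, 0)
  have ha := analyticAt_slice_zero hh₁'
  have hb := analyticAt_slice_zero hh₂'
  have hslice := eventually_slice_eq_zero (hflat.oneJet hP hpos) hg hh₁ hh₁0
    hh₂.self_of_nhds.continuousAt hre
  exact ⟨imSlope F, _,
    { contDiffAt := hP
      eventually_pos := hpos
      isFlat := hflat
      analyticAt_slope := hg
      analyticAt_remainder :=
        ((he.neg.mul (analyticAt_im ha)).add ((analyticAt_const.add (hg.pow 2)).mul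
          (analyticAt_im (analyticAt_slice_zero hh₁'')))).sub
          (analyticAt_clm_apply hg.fderiv hb.restrictScalars)
      analyticAt_fst := ha
      analyticAt_snd := hb
      ne_zero := hβ
      angular := isBigO_angular (hP.continuousAt_fderiv two_ne_zero) hP0 hg.continuousAt hh₁ hh₂ hre
        hslice hnorm
      transverse := isBigO_transverse hP0 hg he.continuousAt hh₁ hh₂ htr hslice hnorm }⟩

theorem stmt_17_general {P : ℂ → ℝ} {F : ℂ × ℝ → ℝ} {h₁ h₂ : ℂ × ℂ → ℂ} {β : ℝ}
    (hP : ContDiffAt ℝ 2 P 0) (hpos : ∀ᶠ z in 𝓝[≠] 0, 0 < P z) (hflat : IsFlat P)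
    (hF : AnalyticAt ℝ F 0) (hF0 : ∀ᶠ z in 𝓝 0, F (z, 0) = 0)
    (hh₁ : ∀ᶠ p in 𝓝 0, DifferentiableAt ℂ h₁ p) (hh₂ : ∀ᶠ p in 𝓝 0, DifferentiableAt ℂ h₂ p)
    (hh₁0 : h₁ 0 = 0) (hT : IsTangentNearZero P F h₁ h₂) (hβ : β ≠ 0)
    (hnorm : ∀ᶠ z in 𝓝 0, h₂ (0, z) = I * β * z) :
    ∀ᶠ z in 𝓝 0, deriv (fun w => h₂ (w, z)) 0 = 0 := by
  obtain ⟨g, A, hR⟩ := hT.exists_reducedTangency hP hpos hflat hF hF0 hh₁ hh₂ hh₁0 hβ hnorm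
  have hslice : Tendsto (fun z : ℂ => ((0 : ℂ), z)) (𝓝 0) (𝓝 0) :=
    Continuous.tendsto' (by fun_prop) 0 0 rfl
  filter_upwards [hR.eventually_snd_eq_zero, hslice.eventually hh₂] with z hz hdz
  rw [(hasDerivAt_fst hdz).deriv, hz]

/-- Claim 4.3 of the paper: under the normalization `h₂(0,z₂) = iβz₂`, the coefficient
`b₁(z₂) = ∂h₂/∂z₁(0,z₂)` vanishes identically near `0`. -/
theorem stmt_17
    (r s : ℝ) (hr : 0 < r) (hs : 0 < s)
    (P : ℂ → ℝ) (f : ℂ → ℝ → ℝ)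
    (hPsm : ContDiffOn ℝ (⊤ : ℕ∞) P (ball (0:ℂ) r))
    (hP0 : P 0 = 0)
    (hPpos : ∀ z ∈ ball (0:ℂ) r, z ≠ 0 → 0 < P z)
    (hPflat : ∀ n : ℕ, P =o[nhds (0:ℂ)] fun z => ‖z‖ ^ n)
    (hfan : AnalyticOnNhd ℝ (fun q : ℂ × ℝ => f q.1 q.2) (ball (0:ℂ) r ×ˢ Set.Ioo (-r) r))
    (hf0 : ∀ z ∈ ball (0:ℂ) r, f z 0 = 0)
    (h₁ h₂ : ℂ × ℂ → ℂ)
    (hh₁ : DifferentiableOn ℂ h₁ (ball (0 : ℂ × ℂ) s))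
    (hh₂ : DifferentiableOn ℂ h₂ (ball (0 : ℂ × ℂ) s))
    (hv₁ : h₁ 0 = 0) (hv₂ : h₂ 0 = 0)
    (hne : ∃ z ∈ ball (0 : ℂ × ℂ) s, h₁ z ≠ 0 ∨ h₂ z ≠ 0)
    (htang : ∀ z : ℂ × ℂ, z ∈ ball (0 : ℂ × ℂ) s → z.1 ∈ ball (0:ℂ) r → z.2 ∈ ball (0:ℂ) r →
      z.1.re + P z.2 + f z.2 z.1.im = 0 →
      (h₁ z * wDeriv (fun w => w.re + P z.2 + f z.2 w.im) z.1
        + h₂ z * wDeriv (fun w => z.1.re + P w + f w z.1.im) z.2).re = 0)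
    (hnrot : ¬ (∀ z₂ ∈ ball (0:ℂ) r, ∀ z₂' ∈ ball (0:ℂ) r, ‖z₂‖ = ‖z₂'‖ →
      ∀ t ∈ Set.Ioo (-r) r, P z₂ + f z₂ t = P z₂' + f z₂' t))
    (β : ℝ) (hβ : β ≠ 0) (t₀ : ℝ) (ht₀ : 0 < t₀)
    (hnorm : ∀ z₂ ∈ ball (0:ℂ) t₀, h₂ (0, z₂) = Complex.I * (β:ℂ) * z₂) :
    ∃ t : ℝ, 0 < t ∧ ∀ z₂ ∈ ball (0:ℂ) t, deriv (fun w => h₂ (w, z₂)) 0 = 0 := by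
  have hball : ∀ᶠ z in 𝓝 (0 : ℂ), z ∈ ball (0 : ℂ) r := ball_mem_nhds 0 hr
  have hball₂ : ∀ᶠ p in 𝓝 (0 : ℂ × ℂ), p ∈ ball (0 : ℂ × ℂ) s := ball_mem_nhds 0 hs
  have hP : ContDiffAt ℝ 2 P 0 := contDiffAt_infty.1 (hPsm.contDiffAt hball) 2
  have hpos : ∀ᶠ z in 𝓝[≠] 0, 0 < P z :=
    eventually_nhdsWithin_iff.2 (hball.mono hPpos)
  have hF : AnalyticAt ℝ (fun q : ℂ × ℝ => f q.1 q.2) 0 := hfan 0 (by simp [hr])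
  have hT : IsTangentNearZero P (fun q => f q.1 q.2) h₁ h₂ := by
    filter_upwards [hball₂, continuousAt_fst.eventually hball, continuousAt_snd.eventually hball]
    exact htang
  exact eventually_nhds_iff_ball.1 <| stmt_17_general hP hpos hPflat hF (hball.mono hf0)
    (hball₂.mono fun p hp => hh₁.differentiableAt (isOpen_ball.mem_nhds hp))
    (hball₂.mono fun p hp => hh₂.differentiableAt (isOpen_ball.mem_nhds hp)) hv₁ hT hβ
    (eventually_nhds_iff_ball.2 ⟨t₀, ht₀, hnorm⟩)
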